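/- arXiv:2408.14981 — 3 statements merged into one kernel-verified Lean document; each statement's English description precedes it below -/
import Mathlib

section
/- Let π : (Z, U) → (Y, S) be a factor map of topological dynamical systems and f ∈ C(Z) a continuous real-valued function. Then the functional ψ_f : M_S(Y) → ℝ defined by ψ_f(ν) = min { ∫ f dλ : λ ∈ M_U(Z), π_* λ = ν } is lower semi-continuous and convex on M_S(Y) with the weak* topology. -/
open MeasureTheory Filter Topology
open scoped ENNReal NNReal

noncomputable section

/-- The set of `U`-invariant Borel probability measures. -/
def invMeas {Z : Type*} [MeasurableSpace Z] (U : Z → Z) : Set (ProbabilityMeasure Z) :=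
  {μ | μ.toMeasure.map U = μ.toMeasure}

/-- `ψ_f(ν) = min { ∫ f dλ : λ ∈ M_U(Z), π_* λ = ν }` (the minimum is attained, so it
equals the infimum). -/
def psi {Z Y : Type*} [MeasurableSpace Z] [MeasurableSpace Y]
    (U : Z → Z) (π : Z → Y) (f : Z → ℝ) (ν : ProbabilityMeasure Y) : ℝ :=
  sInf {r | ∃ lam ∈ invMeas U, lam.toMeasure.map π = ν.toMeasure ∧
    r = ∫ z, f z ∂lam.toMeasure}

/-- A normalized positive linear functional on `C(X, ℝ)`, `X` compact Hausdorff, is integration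
against a Borel probability measure. -/
lemma exists_probabilityMeasure_integral_eq {X : Type*} [TopologicalSpace X] [CompactSpace X]
    [T2Space X] [MeasurableSpace X] [BorelSpace X] (Λ : C(X, ℝ) →ₗ[ℝ] ℝ)
    (hpos : ∀ f, 0 ≤ f → 0 ≤ Λ f) (hone : Λ 1 = 1) :
    ∃ μ : ProbabilityMeasure X, ∀ f : C(X, ℝ), ∫ x, f x ∂μ.toMeasure = Λ f := by
  let Λ' : CompactlySupportedContinuousMap X ℝ →ₚ[ℝ] ℝ :=
    { toFun := fun g => Λ g.toContinuousMap
      map_add' := fun g g' => Λ.map_add g.toContinuousMap g'.toContinuousMap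
      map_smul' := fun c g => Λ.map_smul c g.toContinuousMap
      monotone' := fun g g' h => by
        have := hpos (g'.toContinuousMap - g.toContinuousMap) fun x => sub_nonneg.2 (h x)
        rw [map_sub] at this
        exact sub_nonneg.1 this }
  have key (f : C(X, ℝ)) : ∫ x, f x ∂(RealRMK.rieszMeasure Λ') = Λ f :=
    RealRMK.integral_rieszMeasure Λ' ⟨f, HasCompactSupport.of_compactSpace _⟩
  have huniv : IsProbabilityMeasure (RealRMK.rieszMeasure Λ') := by
    have h := key 1
    rw [hone] at h
    simpa [← isProbabilityMeasure_iff_real] using h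
  exact ⟨⟨_, huniv⟩, key⟩

/-- If a function is bounded below by a coboundary over a homeomorphism upstairs, its integral
against an invariant measure downstairs is nonnegative. -/
lemma integral_nonneg_of_add_coboundary_nonneg {Z Y : Type*} [TopologicalSpace Z] [CompactSpace Z]
    [TopologicalSpace Y] [CompactSpace Y] [MeasurableSpace Y] [BorelSpace Y]
    {U : Z → Z} {S : Y → Y} {π : Z → Y} (hS : Continuous S) (hπsurj : Function.Surjective π)
    (hfactor : Function.Semiconj π U S) {ν : ProbabilityMeasure Y} (hν : ν ∈ invMeas S)
    (h : C(Y, ℝ)) (g : C(Z, ℝ)) (hnonneg : ∀ z, 0 ≤ h (π z) + (g (U z) - g z)) :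
    0 ≤ ∫ y, h y ∂ν.toMeasure := by
  have hmp : MeasurePreserving S ν.toMeasure ν.toMeasure := ⟨hS.measurable, hν⟩
  have hint (n : ℕ) : Integrable (fun y => h (S^[n] y)) ν.toMeasure :=
    (h.continuous.comp (hS.iterate n)).integrable_of_hasCompactSupport
      (HasCompactSupport.of_compactSpace _)
  have hsame (n : ℕ) : ∫ y, h (S^[n] y) ∂ν.toMeasure = ∫ y, h y ∂ν.toMeasure := by
    rw [← integral_map (hmp.iterate n).aemeasurable h.continuous.aestronglyMeasurable,
      (hmp.iterate n).map_eq]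
  have hsum (n : ℕ) (z : Z) :
      0 ≤ ∑ k ∈ Finset.range n, h (S^[k] (π z)) + (g (U^[n] z) - g z) := by
    induction n with
    | zero => simp
    | succ n ih =>
      have h1 := hnonneg (U^[n] z)
      rw [(hfactor.iterate_right n).eq z, ← Function.iterate_succ_apply' U] at h1
      rw [Finset.sum_range_succ]
      linarith
  have hbound (n : ℕ) : -(2 * ‖g‖) ≤ n * ∫ y, h y ∂ν.toMeasure := by
    calc -(2 * ‖g‖) = ∫ _, -(2 * ‖g‖) ∂ν.toMeasure := by simp
      _ ≤ ∫ y, ∑ k ∈ Finset.range n, h (S^[k] y) ∂ν.toMeasure := by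
        refine integral_mono (integrable_const _) (integrable_finsetSum _ fun k _ => hint k) ?_
        intro y
        obtain ⟨z, rfl⟩ := hπsurj y
        have h1 := hsum n z
        have h2 := abs_le.1 (g.norm_coe_le_norm (U^[n] z))
        have h3 := abs_le.1 (g.norm_coe_le_norm z)
        dsimp only
        linarith [h2.2, h3.1]
      _ = n * ∫ y, h y ∂ν.toMeasure := by
        rw [integral_finsetSum _ fun k _ => hint k]
        simp [hsame]
  by_contra! hneg
  obtain ⟨n, hn⟩ := exists_nat_gt (2 * ‖g‖ / -∫ y, h y ∂ν.toMeasure)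
  rw [div_lt_iff₀ (by linarith)] at hn
  linarith [hbound n]

/-- Along a factor map, every invariant measure lifts to an invariant measure. -/
lemma exists_invMeas_map_eq {Z Y : Type*}
    [TopologicalSpace Z] [CompactSpace Z] [TopologicalSpace.MetrizableSpace Z]
    [MeasurableSpace Z] [BorelSpace Z]
    [TopologicalSpace Y] [CompactSpace Y] [TopologicalSpace.MetrizableSpace Y]
    [MeasurableSpace Y] [BorelSpace Y]
    {U : Z → Z} {S : Y → Y} {π : Z → Y} (hU : Continuous U) (hS : Continuous S)
    (hπcont : Continuous π) (hπsurj : Function.Surjective π)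
    (hfactor : Function.Semiconj π U S) {ν : ProbabilityMeasure Y} (hν : ν ∈ invMeas S) :
    ∃ lam ∈ invMeas U, lam.toMeasure.map π = ν.toMeasure := by
  let U' : C(Z, Z) := ⟨U, hU⟩
  let π' : C(Z, Y) := ⟨π, hπcont⟩
  let I : C(Y, ℝ) →ₗ[ℝ] ℝ :=
    { toFun := fun h => ∫ y, h y ∂ν.toMeasure
      map_add' := fun h h' => integral_add
        (h.continuous.integrable_of_hasCompactSupport (HasCompactSupport.of_compactSpace _))
        (h'.continuous.integrable_of_hasCompactSupport (HasCompactSupport.of_compactSpace _))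
      map_smul' := fun c h => integral_smul c h }
  let coboundary : C(Z, ℝ) →ₗ[ℝ] C(Z, ℝ) :=
    { toFun := fun g => g.comp U' - g
      map_add' := fun g g' => by ext; simp; ring
      map_smul' := fun c g => by ext; simp; ring }
  let p : Submodule ℝ (C(Y, ℝ) × C(Z, ℝ)) := (LinearMap.range coboundary).comap (.snd ℝ _ _)
  let F : C(Y, ℝ) × C(Z, ℝ) →ₗ.[ℝ] ℝ := ⟨p, (I ∘ₗ .fst ℝ _ _).domRestrict p⟩
  let K : PointedCone ℝ (C(Y, ℝ) × C(Z, ℝ)) :=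
    { carrier := {x | ∀ z, 0 ≤ x.1 (π z) + x.2 z}
      add_mem' := fun {x x'} hx hx' z => by
        have := add_nonneg (hx z) (hx' z)
        simp only [Prod.fst_add, Prod.snd_add, ContinuousMap.add_apply]
        linarith
      zero_mem' := fun z => by simp
      smul_mem' := fun c x hx z => by
        have := mul_nonneg c.2 (hx z)
        simpa [mul_add, NNReal.smul_def, Nonneg.mk_smul] using! this }
  obtain ⟨G, hGF, hGK⟩ := riesz_extension K F
    (by
      rintro ⟨⟨h, k⟩, g, hg⟩ hx
      change coboundary g = k at hg
      subst hg
      exact integral_nonneg_of_add_coboundary_nonneg hS hπsurj hfactor hν h g hx)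
    (by
      rintro ⟨h, k⟩
      refine ⟨⟨(ContinuousMap.const Y ‖k‖ - h, 0), 0, map_zero coboundary⟩, fun z => ?_⟩
      have := (abs_le.1 (k.norm_coe_le_norm z)).1
      simp
      linarith)
  have hG (h : C(Y, ℝ)) (g : C(Z, ℝ)) : G (h, coboundary g) = ∫ y, h y ∂ν.toMeasure :=
    hGF ⟨(h, coboundary g), g, rfl⟩
  let Λ : C(Z, ℝ) →ₗ[ℝ] ℝ := G ∘ₗ .inr ℝ _ _
  have hΛcob (g : C(Z, ℝ)) : Λ (g.comp U') = Λ g := by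
    have : Λ (coboundary g) = 0 := (hG 0 g).trans (by simp)
    exact sub_eq_zero.1 ((Λ.map_sub _ _).symm.trans this)
  have hΛπ (h : C(Y, ℝ)) : Λ (h.comp π') = ∫ y, h y ∂ν.toMeasure := by
    have h0 : G (h, 0) = ∫ y, h y ∂ν.toMeasure := by simpa using hG h 0
    have h1 : 0 ≤ G ((h, 0) - (0, h.comp π')) := hGK _ fun z => by simp [π']
    have h2 : 0 ≤ G ((0, h.comp π') - (h, 0)) := hGK _ fun z => by simp [π']
    rw [map_sub] at h1 h2
    change G (0, h.comp π') = _
    linarith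
  obtain ⟨lam, hlam⟩ := exists_probabilityMeasure_integral_eq Λ
    (fun f hf => hGK _ fun z => by simpa using! hf z)
    ((hΛπ 1).trans (by simp))
  have : IsProbabilityMeasure (lam.toMeasure.map U) :=
    Measure.isProbabilityMeasure_map hU.aemeasurable
  have : IsProbabilityMeasure (lam.toMeasure.map π) :=
    Measure.isProbabilityMeasure_map hπcont.aemeasurable
  refine ⟨lam, ext_of_forall_integral_eq_of_IsFiniteMeasure fun g => ?_,
    ext_of_forall_integral_eq_of_IsFiniteMeasure fun h => ?_⟩
  · rw [integral_map hU.aemeasurable g.continuous.aestronglyMeasurable]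
    exact (hlam (g.toContinuousMap.comp U')).trans
      ((hΛcob _).trans (hlam g.toContinuousMap).symm)
  · rw [integral_map hπcont.aemeasurable h.continuous.aestronglyMeasurable]
    exact (hlam (h.toContinuousMap.comp π')).trans (hΛπ _)

lemma isClosed_invMeas {Z : Type*} [TopologicalSpace Z] [TopologicalSpace.MetrizableSpace Z]
    [MeasurableSpace Z] [BorelSpace Z] {U : Z → Z} (hU : Continuous U) :
    IsClosed (invMeas U) := by
  have : invMeas U = {μ | μ.map hU.aemeasurable = μ} := by
    ext μ
    exact (ProbabilityMeasure.toMeasure_injective.eq_iff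
      (a := μ.map hU.aemeasurable) (b := μ))
  rw [this]
  exact isClosed_eq (ProbabilityMeasure.continuous_map hU) continuous_id

lemma bddBelow_integral_lifts {Z Y : Type*} [TopologicalSpace Z] [CompactSpace Z]
    [MeasurableSpace Z] [BorelSpace Z] [MeasurableSpace Y] (U : Z → Z) (π : Z → Y) {f : Z → ℝ}
    (hf : Continuous f) (ν : ProbabilityMeasure Y) :
    BddBelow {r | ∃ lam ∈ invMeas U, lam.toMeasure.map π = ν.toMeasure ∧
      r = ∫ z, f z ∂lam.toMeasure} := by
  obtain ⟨c, hc⟩ := (isCompact_range hf).bddBelow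
  refine ⟨c, ?_⟩
  rintro r ⟨lam, -, -, rfl⟩
  calc c = ∫ _, c ∂lam.toMeasure := by simp
    _ ≤ ∫ z, f z ∂lam.toMeasure := integral_mono (integrable_const _)
        (hf.integrable_of_hasCompactSupport (HasCompactSupport.of_compactSpace _))
        fun z => hc ⟨z, rfl⟩

/-- for a factor map `π : (Z,U) → (Y,S)` and `f ∈ C(Z)`, the functional
`ψ_f : M_S(Y) → ℝ` is lower semicontinuous and convex on `M_S(Y)` (weak* topology). -/
theorem stmt1
    {Z Y : Type*}
    [TopologicalSpace Z] [CompactSpace Z] [TopologicalSpace.MetrizableSpace Z]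
    [MeasurableSpace Z] [BorelSpace Z]
    [TopologicalSpace Y] [CompactSpace Y] [TopologicalSpace.MetrizableSpace Y]
    [MeasurableSpace Y] [BorelSpace Y]
    (U : Z ≃ₜ Z) (S : Y ≃ₜ Y) (π : Z → Y)
    (hπcont : Continuous π) (hπsurj : Function.Surjective π)
    (hfactor : ⇑S ∘ π = π ∘ ⇑U)
    (f : Z → ℝ) (hf : Continuous f) :
    -- lower semicontinuity on `M_S(Y)`
    LowerSemicontinuousOn (psi (⇑U) π f) (invMeas ⇑S) ∧
    -- convexity on `M_S(Y)`
    (∀ ω₁ ∈ invMeas ⇑S, ∀ ω₂ ∈ invMeas ⇑S, ∀ t : ℝ≥0, t ≤ 1 →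
      ∀ ω : ProbabilityMeasure Y,
        ω.toMeasure = (t : ℝ≥0∞) • ω₁.toMeasure + (1 - (t : ℝ≥0∞)) • ω₂.toMeasure →
        psi (⇑U) π f ω ≤ (t : ℝ) * psi (⇑U) π f ω₁ + (1 - (t : ℝ)) * psi (⇑U) π f ω₂) := by
  have hne (ν : ProbabilityMeasure Y) (hν : ν ∈ invMeas ⇑S) :
      {r | ∃ lam ∈ invMeas ⇑U, lam.toMeasure.map π = ν.toMeasure ∧
        r = ∫ z, f z ∂lam.toMeasure}.Nonempty := by
    obtain ⟨lam, hlam, hmap⟩ := exists_invMeas_map_eq U.continuous S.continuous hπcont hπsurj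
      (fun z => (congrFun hfactor z).symm) hν
    exact ⟨_, lam, hlam, hmap, rfl⟩
  refine ⟨fun ν₀ _ y hy => ?_, fun ω₁ hω₁ ω₂ hω₂ t ht ω hω => ?_⟩
  · obtain ⟨y', hyy', hy'⟩ := exists_between hy
    let K : Set (ProbabilityMeasure Z) := invMeas U ∩ {lam | ∫ z, f z ∂lam.toMeasure ≤ y'}
    have hK : IsCompact K := ((isClosed_invMeas U.continuous).inter (isClosed_le
      (ProbabilityMeasure.continuous_integral_continuousMap (⟨f, hf⟩ : C(Z, ℝ)))
      continuous_const)).isCompact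
    have himage : IsClosed
        ((fun lam : ProbabilityMeasure Z => lam.map hπcont.aemeasurable) '' K) :=
      (hK.image (ProbabilityMeasure.continuous_map hπcont)).isClosed
    have hν₀ : ν₀ ∉ (fun lam : ProbabilityMeasure Z => lam.map hπcont.aemeasurable) '' K := by
      rintro ⟨lam, ⟨hlam, hle⟩, rfl⟩
      exact (hy'.trans_le (csInf_le (bddBelow_integral_lifts U π hf _)
        ⟨lam, hlam, rfl, rfl⟩)).not_ge hle
    filter_upwards [nhdsWithin_le_nhds (himage.isOpen_compl.mem_nhds hν₀), self_mem_nhdsWithin]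
      with ν hν hνS
    refine hyy'.trans_le (le_csInf (hne ν hνS) ?_)
    rintro r ⟨lam, hlam, hmap, rfl⟩
    by_contra! hlt
    exact hν ⟨lam, ⟨hlam, hlt.le⟩, ProbabilityMeasure.toMeasure_injective hmap⟩
  · refine le_of_forall_pos_le_add fun ε hε => ?_
    obtain ⟨_, ⟨lam₁, hlam₁, hmap₁, rfl⟩, hlt₁⟩ :=
      Real.lt_sInf_add_pos (hne ω₁ hω₁) hε
    obtain ⟨_, ⟨lam₂, hlam₂, hmap₂, rfl⟩, hlt₂⟩ :=
      Real.lt_sInf_add_pos (hne ω₂ hω₂) hε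
    change _ < psi U π f ω₁ + ε at hlt₁
    change _ < psi U π f ω₂ + ε at hlt₂
    have ht' : (1 - (t : ℝ≥0∞)) = ((1 - t : ℝ≥0) : ℝ≥0∞) := by simp
    have hle : (t : ℝ) ≤ 1 := by exact_mod_cast ht
    let m : Measure Z := (t : ℝ≥0∞) • lam₁.toMeasure + (1 - (t : ℝ≥0∞)) • lam₂.toMeasure
    have hm : IsProbabilityMeasure m := ⟨by
      simp [m, add_tsub_cancel_of_le (ENNReal.coe_le_one_iff.2 ht)]⟩
    have hinv : (⟨m, hm⟩ : ProbabilityMeasure Z) ∈ invMeas U := by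
      change m.map U = m
      rw [Measure.map_add _ _ U.continuous.measurable, Measure.map_smul, Measure.map_smul,
        show lam₁.toMeasure.map U = _ from hlam₁, show lam₂.toMeasure.map U = _ from hlam₂]
    have hmap : m.map π = ω.toMeasure := by
      rw [hω, Measure.map_add _ _ hπcont.measurable, Measure.map_smul, Measure.map_smul,
        hmap₁, hmap₂]
    have hint (lam : ProbabilityMeasure Z) : Integrable f lam.toMeasure :=
      hf.integrable_of_hasCompactSupport (HasCompactSupport.of_compactSpace _)
    have hval : ∫ z, f z ∂m
        = t * ∫ z, f z ∂lam₁.toMeasure + (1 - (t : ℝ)) * ∫ z, f z ∂lam₂.toMeasure := by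
      simp only [m, ht']
      rw [integral_add_measure ((hint _).smul_measure (by simp))
        ((hint _).smul_measure (by simp)), integral_smul_measure, integral_smul_measure]
      simp [NNReal.coe_sub ht, -ENNReal.coe_sub]
    calc psi U π f ω ≤ ∫ z, f z ∂m :=
          csInf_le (bddBelow_integral_lifts U π hf ω) ⟨⟨m, hm⟩, hinv, hmap, rfl⟩
      _ ≤ t * (psi U π f ω₁ + ε) + (1 - (t : ℝ)) * (psi U π f ω₂ + ε) := by
          rw [hval]
          have := t.coe_nonneg
          have : 0 ≤ 1 - (t : ℝ) := by linarith
          gcongr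
      _ = _ := by ring
end
end

section
/- Let π : (Z, U) → (Y, S) be a factor map of topological dynamical systems and f ∈ C(Z). Then α(f) ≤ β(f). -/
open MeasureTheory Filter Topology
open scoped ENNReal NNReal

noncomputable section

/-- Birkhoff average of `f` along the orbit of `z` under `U`, over times `0, …, k-1`. -/
def birk {Z : Type*} (U : Z → Z) (f : Z → ℝ) (k : ℕ) (z : Z) : ℝ :=
  (k : ℝ)⁻¹ * ∑ j ∈ Finset.range k, f (U^[j] z)

/-- `α(f) = sup_{ν ∈ M_S(Y)} ψ_f(ν)`. -/
def alphaF {Z Y : Type*} [MeasurableSpace Z] [MeasurableSpace Y]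
    (U : Z → Z) (S : Y → Y) (π : Z → Y) (f : Z → ℝ) : ℝ :=
  sSup {r | ∃ ν ∈ invMeas S, r = psi U π f ν}

/-- `R_f`: points whose Birkhoff averages converge. -/
def regPts {Z : Type*} (U : Z → Z) (f : Z → ℝ) : Set Z :=
  {z | ∃ L : ℝ, Tendsto (fun k : ℕ => birk U f k z) atTop (𝓝 L)}

/-- `β(f) = sup_{y ∈ π(R_f)} inf_{z ∈ R_f ∩ π⁻¹{y}} lim_k A_k f(z)`. -/
def betaF {Z Y : Type*} (U : Z → Z) (π : Z → Y) (f : Z → ℝ) : ℝ :=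
  sSup {r | ∃ y ∈ π '' regPts U f,
    r = sInf {L | ∃ z ∈ regPts U f, π z = y ∧
      Tendsto (fun k : ℕ => birk U f k z) atTop (𝓝 L)}}

section Birkhoff

variable {X : Type*}

/-- The maximum of the Birkhoff sums of `g` over times `0, …, n`, defined recursively. -/
def maxBirkhoffSum (T : X → X) (g : X → ℝ) : ℕ → X → ℝ
  | 0, _ => 0
  | n + 1, x => max 0 (g x + maxBirkhoffSum T g n (T x))

lemma maxBirkhoffSum_nonneg (T : X → X) (g : X → ℝ) (n : ℕ) (x : X) :
    0 ≤ maxBirkhoffSum T g n x := by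
  cases n <;> simp [maxBirkhoffSum]

lemma maxBirkhoffSum_le_succ (T : X → X) (g : X → ℝ) (n : ℕ) (x : X) :
    maxBirkhoffSum T g n x ≤ maxBirkhoffSum T g (n + 1) x := by
  induction n generalizing x with
  | zero => simp [maxBirkhoffSum]
  | succ n ih =>
    rw [maxBirkhoffSum, maxBirkhoffSum]
    gcongr
    exact ih _

lemma birkhoffSum_le_maxBirkhoffSum (T : X → X) (g : X → ℝ) (n : ℕ) (x : X) :
    birkhoffSum T g n x ≤ maxBirkhoffSum T g n x := by
  induction n generalizing x with
  | zero => simp [maxBirkhoffSum]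
  | succ n ih =>
    rw [maxBirkhoffSum, birkhoffSum_succ']
    exact le_max_of_le_right (by gcongr; exact ih _)

lemma maxBirkhoffSum_le_mul {T : X → X} {g : X → ℝ} {C : ℝ} (hC : ∀ x, |g x| ≤ C)
    (n : ℕ) (x : X) : maxBirkhoffSum T g n x ≤ n * C := by
  induction n generalizing x with
  | zero => simp [maxBirkhoffSum]
  | succ n ih =>
    rw [maxBirkhoffSum]
    have h0 : 0 ≤ C := (abs_nonneg _).trans (hC x)
    refine max_le (by positivity) ?_
    have := ih (T x)
    have := (abs_le.1 (hC x)).2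
    push_cast
    linarith

lemma abs_birk_le {T : X → X} {g : X → ℝ} {C : ℝ} (hC : ∀ x, |g x| ≤ C) (k : ℕ) (x : X) :
    |birk T g k x| ≤ C := by
  have h0 : 0 ≤ C := (abs_nonneg _).trans (hC x)
  rcases Nat.eq_zero_or_pos k with rfl | hk
  · simpa [birk] using h0
  have hk' : (0 : ℝ) < k := by exact_mod_cast hk
  rw [birk, abs_mul, abs_of_pos (inv_pos.2 hk'), inv_mul_le_iff₀ hk']
  calc |∑ j ∈ Finset.range k, g (T^[j] x)| ≤ ∑ j ∈ Finset.range k, |g (T^[j] x)| :=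
        Finset.abs_sum_le_sum_abs _ _
    _ ≤ ∑ j ∈ Finset.range k, C := Finset.sum_le_sum fun _ _ ↦ hC _
    _ = k * C := by simp

lemma tendsto_birk_comp_sub {T : X → X} {g : X → ℝ} {C : ℝ} (hC : ∀ x, |g x| ≤ C) (x : X) :
    Tendsto (fun k ↦ birk T g k (T x) - birk T g k x) atTop (𝓝 0) :=
  tendsto_birkhoffAverage_apply_sub_birkhoffAverage' ℝ
    (isBounded_iff_forall_norm_le.2 ⟨C, by rintro _ ⟨y, rfl⟩; exact hC y⟩) T x

/-- The upper limit of the Birkhoff averages of `g`. -/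
def limsupBirk (T : X → X) (g : X → ℝ) (x : X) : ℝ := limsup (fun k ↦ birk T g k x) atTop

lemma isBoundedUnder_le_birk {T : X → X} {g : X → ℝ} {C : ℝ} (hC : ∀ x, |g x| ≤ C) (x : X) :
    IsBoundedUnder (· ≤ ·) atTop fun k ↦ birk T g k x :=
  isBoundedUnder_of ⟨C, fun k ↦ (abs_le.1 (abs_birk_le hC k x)).2⟩

lemma isCoboundedUnder_le_birk {T : X → X} {g : X → ℝ} {C : ℝ} (hC : ∀ x, |g x| ≤ C) (x : X) :
    IsCoboundedUnder (· ≤ ·) atTop fun k ↦ birk T g k x :=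
  (isBoundedUnder_of ⟨-C, fun k ↦ (abs_le.1 (abs_birk_le hC k x)).1⟩ :
    IsBoundedUnder (· ≥ ·) atTop fun k ↦ birk T g k x).isCoboundedUnder_le

lemma eventually_birk_lt {T : X → X} {g : X → ℝ} {C : ℝ} (hC : ∀ x, |g x| ≤ C) (x : X) {a : ℝ}
    (h : limsupBirk T g x < a) : ∀ᶠ k in atTop, birk T g k x < a :=
  eventually_lt_of_limsup_lt h (isBoundedUnder_le_birk hC x)

lemma abs_limsupBirk_le {T : X → X} {g : X → ℝ} {C : ℝ} (hC : ∀ x, |g x| ≤ C) (x : X) :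
    |limsupBirk T g x| ≤ C :=
  abs_le.2 ⟨le_limsup_of_frequently_le
      (Frequently.of_forall fun k ↦ (abs_le.1 (abs_birk_le hC k x)).1) (isBoundedUnder_le_birk hC x),
    limsup_le_of_le (isCoboundedUnder_le_birk hC x)
      (Eventually.of_forall fun k ↦ (abs_le.1 (abs_birk_le hC k x)).2)⟩

lemma limsupBirk_comp_le {T : X → X} {g : X → ℝ} {C : ℝ} (hC : ∀ x, |g x| ≤ C) (x : X) :
    limsupBirk T g (T x) ≤ limsupBirk T g x := by
  refine le_of_forall_pos_le_add fun ε hε ↦ limsup_le_of_le (isCoboundedUnder_le_birk hC _) ?_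
  filter_upwards [eventually_birk_lt hC x (show limsupBirk T g x < limsupBirk T g x + ε / 2 by
    linarith), (tendsto_birk_comp_sub (T := T) hC x).eventually_lt_const (half_pos hε)]
    with k h1 h2
  linarith

lemma limsupBirk_iterate_le {T : X → X} {g : X → ℝ} {C : ℝ} (hC : ∀ x, |g x| ≤ C) (n : ℕ) (x : X) :
    limsupBirk T g (T^[n] x) ≤ limsupBirk T g x := by
  induction n with
  | zero => rfl
  | succ n ih =>
    rw [Function.iterate_succ_apply']
    exact (limsupBirk_comp_le hC _).trans ih

variable [MeasurableSpace X]

lemma measurable_maxBirkhoffSum {T : X → X} (hT : Measurable T) {g : X → ℝ} (hg : Measurable g)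
    (n : ℕ) : Measurable (maxBirkhoffSum T g n) := by
  induction n with
  | zero => exact measurable_const
  | succ n ih => exact measurable_const.max (hg.add (ih.comp hT))

lemma integrable_of_abs_le {μ : Measure X} [IsFiniteMeasure μ] {g : X → ℝ} (hg : Measurable g)
    {C : ℝ} (hC : ∀ x, |g x| ≤ C) : Integrable g μ :=
  Integrable.of_bound hg.aestronglyMeasurable C (ae_of_all _ hC)

/-- The maximal ergodic theorem, for a bounded function with a positive Birkhoff sum at every
point. -/
lemma integral_nonneg_of_exists_birkhoffSum_pos {μ : Measure X} [IsFiniteMeasure μ] {T : X → X}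
    (hT : MeasurePreserving T μ μ) {g : X → ℝ} (hg : Measurable g) {C : ℝ}
    (hC : ∀ x, |g x| ≤ C) (hpos : ∀ x, ∃ n, 0 < birkhoffSum T g n x) : 0 ≤ ∫ x, g x ∂μ := by
  set M := maxBirkhoffSum T g with hM
  have hMm : ∀ n, Measurable (M n) := measurable_maxBirkhoffSum hT.measurable hg
  have hMi : ∀ n, Integrable (M n) μ := fun n ↦ integrable_of_abs_le (hMm n) (C := n * C) fun x ↦ by
    rw [abs_of_nonneg (maxBirkhoffSum_nonneg T g n x)]
    exact maxBirkhoffSum_le_mul hC n x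
  have hs : ∀ n, MeasurableSet {x | 0 < M n x} := fun n ↦
    measurableSet_lt measurable_const (hMm n)
  have key : ∀ n, 0 ≤ ∫ x, {x | 0 < M (n + 1) x}.indicator g x ∂μ := fun n ↦ by
    have h1 : ∫ x, M n (T x) ∂μ = ∫ x, M n x ∂μ := by
      rw [← integral_map hT.measurable.aemeasurable
        ((hMm n).aestronglyMeasurable), hT.map_eq]
    have hTi : Integrable (fun x ↦ M n (T x)) μ := hT.integrable_comp_of_integrable (hMi n)
    have h2 : ∫ x, M n x ∂μ ≤ ∫ x, M (n + 1) x ∂μ :=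
      integral_mono (hMi n) (hMi _) (maxBirkhoffSum_le_succ T g n)
    have h3 : ∫ x, (M (n + 1) x - M n (T x)) ∂μ
        ≤ ∫ x, {x | 0 < M (n + 1) x}.indicator g x ∂μ := by
      refine integral_mono ((hMi _).sub hTi)
        ((integrable_of_abs_le hg hC).indicator (hs _)) fun x ↦ ?_
      have hn := maxBirkhoffSum_nonneg T g n (T x)
      by_cases hx : 0 < M (n + 1) x
      · rw [Set.indicator_of_mem (by exact hx)]
        simp only [hM, maxBirkhoffSum] at hx ⊢
        have := (lt_max_iff.1 hx).resolve_left (lt_irrefl _)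
        rw [max_eq_right this.le]
        linarith
      · rw [Set.indicator_of_notMem (by exact hx)]
        linarith [not_lt.1 hx]
    rw [integral_sub (hMi _) hTi] at h3
    linarith
  have hmono : ∀ x, Monotone fun n ↦ M n x := fun x ↦
    monotone_nat_of_le_succ fun n ↦ maxBirkhoffSum_le_succ T g n x
  have hlim : Tendsto (fun n ↦ ∫ x, {x | 0 < M (n + 1) x}.indicator g x ∂μ) atTop
      (𝓝 (∫ x, g x ∂μ)) := by
    refine tendsto_integral_of_dominated_convergence (fun _ ↦ C)
      (fun n ↦ (hg.indicator (hs _)).aestronglyMeasurable) (integrable_const _)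
      (fun n ↦ ae_of_all _ fun x ↦ ?_) (ae_of_all _ fun x ↦ ?_)
    · exact (norm_indicator_le_norm_self g x).trans (hC x)
    · obtain ⟨m, hm⟩ := hpos x
      refine tendsto_const_nhds.congr' ?_
      filter_upwards [eventually_ge_atTop m] with n hn
      refine (Set.indicator_of_mem ?_ g).symm
      exact hm.trans_le ((birkhoffSum_le_maxBirkhoffSum T g m x).trans
        (hmono x (Nat.le_succ_of_le hn)))
  exact ge_of_tendsto' hlim key

lemma measurable_birk {T : X → X} (hT : Measurable T) {g : X → ℝ} (hg : Measurable g) (k : ℕ) :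
    Measurable (birk T g k) :=
  measurable_const.mul (Finset.measurable_sum _ fun j _ ↦ hg.comp (hT.iterate j))

lemma integral_limsupBirk_le {μ : Measure X} [IsProbabilityMeasure μ] {T : X → X}
    (hT : MeasurePreserving T μ μ) {g : X → ℝ} (hg : Measurable g) {C : ℝ}
    (hC : ∀ x, |g x| ≤ C) : ∫ x, limsupBirk T g x ∂μ ≤ ∫ x, g x ∂μ := by
  have hLm : Measurable (limsupBirk T g) := Measurable.limsup (measurable_birk hT.measurable hg)
  have hLi : Integrable (limsupBirk T g) μ := integrable_of_abs_le hLm (abs_limsupBirk_le hC)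
  have hgi : Integrable g μ := integrable_of_abs_le hg hC
  refine le_of_forall_pos_le_add fun ε hε ↦ ?_
  have key : 0 ≤ ∫ x, (g x - limsupBirk T g x + ε) ∂μ := by
    refine integral_nonneg_of_exists_birkhoffSum_pos hT ((hg.sub hLm).add_const ε)
      (C := C + C + ε) (fun x ↦ ?_) fun x ↦ ?_
    · have h1 := abs_le.1 (hC x)
      have h2 := abs_le.1 (abs_limsupBirk_le (T := T) hC x)
      rw [abs_le]
      constructor <;> linarith
    · obtain ⟨n, hn, hn0⟩ := ((frequently_lt_of_lt_limsup (isCoboundedUnder_le_birk (T := T) hC x)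
        (show limsupBirk T g x - ε < limsupBirk T g x by linarith)).and_eventually
          (eventually_gt_atTop 0)).exists
      refine ⟨n, ?_⟩
      have hn' : (0 : ℝ) < n := by exact_mod_cast hn0
      rw [birk, lt_inv_mul_iff₀ hn'] at hn
      have h1 : birkhoffSum T (fun x ↦ g x - limsupBirk T g x + ε) n x
          = ∑ j ∈ Finset.range n, g (T^[j] x)
            - ∑ j ∈ Finset.range n, limsupBirk T g (T^[j] x) + n * ε := by
        simp [birkhoffSum, Finset.sum_add_distrib, Finset.sum_sub_distrib]
      have h2 : ∑ j ∈ Finset.range n, limsupBirk T g (T^[j] x) ≤ n * limsupBirk T g x := by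
        simpa using Finset.sum_le_card_nsmul (Finset.range n) _ _
          fun j _ ↦ limsupBirk_iterate_le hC j x
      rw [h1]
      linarith
  rw [integral_add (f := fun x ↦ g x - limsupBirk T g x) (hgi.sub hLi) (integrable_const ε),
    integral_sub hgi hLi] at key
  simp at key
  linarith

/-- The pointwise ergodic theorem (existence of the limit) for bounded measurable functions. -/
theorem ae_mem_regPts {μ : Measure X} [IsProbabilityMeasure μ] {T : X → X}
    (hT : MeasurePreserving T μ μ) {g : X → ℝ} (hg : Measurable g) {C : ℝ}
    (hC : ∀ x, |g x| ≤ C) : ∀ᵐ x ∂μ, x ∈ regPts T g := by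
  have hC' : ∀ x, |(-g) x| ≤ C := fun x ↦ by simpa using hC x
  have hneg : ∀ k x, birk T (-g) k x = - birk T g k x := fun k x ↦ by simp [birk]
  have hm : ∀ {g : X → ℝ}, Measurable g → Measurable (limsupBirk T g) := fun hg ↦
    Measurable.limsup (measurable_birk hT.measurable hg)
  have hi := integrable_of_abs_le (μ := μ) (hm hg) (abs_limsupBirk_le hC)
  have hi' := integrable_of_abs_le (μ := μ) (hm hg.neg) (abs_limsupBirk_le hC')
  have hnonneg : ∀ x, 0 ≤ limsupBirk T g x + limsupBirk T (-g) x := fun x ↦ by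
    refine le_of_forall_pos_le_add fun ε hε ↦ ?_
    obtain ⟨k, h1, h2⟩ := ((eventually_birk_lt hC x (show limsupBirk T g x <
      limsupBirk T g x + ε / 2 by linarith)).and (eventually_birk_lt hC' x
      (show limsupBirk T (-g) x < limsupBirk T (-g) x + ε / 2 by linarith))).exists
    rw [hneg] at h2
    linarith
  have h0 : ∫ x, (limsupBirk T g x + limsupBirk T (-g) x) ∂μ = 0 := by
    refine le_antisymm ?_ (integral_nonneg hnonneg)
    rw [integral_add hi hi']
    have h1 := integral_limsupBirk_le hT hg hC
    have h2 := integral_limsupBirk_le hT hg.neg hC'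
    simp only [Pi.neg_apply, integral_neg] at h2
    linarith
  filter_upwards [(integral_eq_zero_iff_of_nonneg hnonneg (hi.add hi')).1 h0] with x hx
  simp only [Pi.zero_apply] at hx
  refine ⟨limsupBirk T g x, Metric.tendsto_atTop'.2 fun ε hε ↦ ?_⟩
  have := (eventually_birk_lt hC x (show limsupBirk T g x < limsupBirk T g x + ε by linarith)).and
    (eventually_birk_lt hC' x (show limsupBirk T (-g) x < limsupBirk T (-g) x + ε by linarith))
  obtain ⟨N, hN⟩ := eventually_atTop.1 this
  refine ⟨N, fun k hk ↦ ?_⟩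
  obtain ⟨h1, h2⟩ := hN k hk.le
  rw [hneg] at h2
  rw [Real.dist_eq, abs_lt]
  constructor <;> linarith

end Birkhoff

section Domination

/-- A sublinear functional on `C(Z, ℝ)` lying below the supremum dominates a probability measure,
which can be chosen to agree with it at a prescribed function. -/
lemma exists_probabilityMeasure_le_sublinear {Z : Type*} [TopologicalSpace Z] [CompactSpace Z]
    [T2Space Z] [MeasurableSpace Z] [BorelSpace Z] (N : C(Z, ℝ) → ℝ)
    (N_smul : ∀ c : ℝ, 0 < c → ∀ h, N (c • h) = c * N h) (N_add : ∀ g h, N (g + h) ≤ N g + N h)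
    (N_le : ∀ (h : C(Z, ℝ)) (c : ℝ), (∀ z, h z ≤ c) → N h ≤ c) (h₀ : C(Z, ℝ)) :
    ∃ lam : ProbabilityMeasure Z, (∀ h : C(Z, ℝ), ∫ z, h z ∂lam.toMeasure ≤ N h) ∧
      ∫ z, h₀ z ∂lam.toMeasure = N h₀ := by
  have N_zero : N 0 = 0 := by
    have := N_smul 2 (by norm_num) 0
    rw [smul_zero] at this
    linarith
  have N_neg : ∀ h, 0 ≤ N h + N (-h) := fun h ↦ by
    have := N_add h (-h)
    rwa [add_neg_cancel, N_zero] at this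
  obtain ⟨Λ, hΛ₀, hΛ⟩ : ∃ Λ : C(Z, ℝ) →ₗ[ℝ] ℝ, Λ h₀ = N h₀ ∧ ∀ h, Λ h ≤ N h := by
    have H : ∀ c : ℝ, c • h₀ = 0 → (RingHom.id ℝ) c • N h₀ = 0 := fun c hc ↦ by
      rcases smul_eq_zero.1 hc with rfl | rfl
      · simp
      · simp [N_zero]
    obtain ⟨Λ, h1, h2⟩ := exists_extension_of_le_sublinear
      (LinearPMap.mkSpanSingleton' h₀ (N h₀) H) N N_smul N_add (by
        rintro ⟨x, hx⟩
        obtain ⟨c, rfl⟩ := Submodule.mem_span_singleton.1 hx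
        rw [LinearPMap.mkSpanSingleton'_apply]
        simp only [RingHom.id_apply, smul_eq_mul]
        rcases lt_trichotomy c 0 with hc | rfl | hc
        · have h1 := N_smul (-c) (neg_pos.2 hc) h₀
          have h2 := N_neg (c • h₀)
          rw [neg_smul] at h1
          linarith
        · simp [N_zero]
        · exact (N_smul c hc h₀).ge)
    refine ⟨Λ, ?_, h2⟩
    exact (h1 ⟨h₀, Submodule.mem_span_singleton_self h₀⟩).trans
      (LinearPMap.mkSpanSingleton'_apply_self h₀ (N h₀) H _)
  let P : CompactlySupportedContinuousMap Z ℝ →ₚ[ℝ] ℝ := PositiveLinearMap.mk₀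
    { toFun := fun h ↦ Λ h.toContinuousMap
      map_add' := fun g h ↦ Λ.map_add g.toContinuousMap h.toContinuousMap
      map_smul' := fun c h ↦ Λ.map_smul c h.toContinuousMap } (fun h hh ↦ by
      have h1 : Λ (-h.toContinuousMap) ≤ 0 :=
        (hΛ _).trans (N_le _ 0 fun z ↦ neg_nonpos.2 (hh z))
      rw [map_neg] at h1
      exact neg_nonpos.1 h1)
  have hP : ∀ h : C(Z, ℝ), ∫ z, h z ∂(RealRMK.rieszMeasure P) = Λ h := fun h ↦
    RealRMK.integral_rieszMeasure P (CompactlySupportedContinuousMap.continuousMapEquiv h)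
  have hone : Λ 1 = 1 := by
    have h1 := (hΛ 1).trans (N_le 1 1 fun z ↦ le_rfl)
    have h2 := (hΛ (-1)).trans (N_le (-1) (-1) fun z ↦ le_rfl)
    rw [map_neg] at h2
    linarith
  have hprob : IsProbabilityMeasure (RealRMK.rieszMeasure P) := by
    have := hP 1
    rw [hone] at this
    simp only [ContinuousMap.one_apply, integral_const, smul_eq_mul, mul_one] at this
    exact ⟨(ENNReal.toReal_eq_one_iff _).1 this⟩
  exact ⟨⟨_, hprob⟩, fun h ↦ (hP h).trans_le (hΛ h), (hP h₀).trans hΛ₀⟩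

end Domination

section FiberSup

variable {Z Y : Type*}

/-- The supremum of `h` over the fibres of `π`. -/
def fiberSup (π : Z → Y) (h : Z → ℝ) (y : Y) : ℝ := sSup (h '' (π ⁻¹' {y}))

lemma fiberSup_const_mul (π : Z → Y) (h : Z → ℝ) {c : ℝ} (hc : 0 ≤ c) (y : Y) :
    fiberSup π (fun z ↦ c * h z) y = c * fiberSup π h y := by
  rw [fiberSup, fiberSup, ← smul_eq_mul c (sSup _), ← Real.sSup_smul_of_nonneg hc,
    ← Set.image_smul, Set.image_image]
  rfl

variable [TopologicalSpace Z] [CompactSpace Z] [TopologicalSpace Y] [T2Space Y]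

lemma le_fiberSup {π : Z → Y} (hπ : Continuous π)
    {h : Z → ℝ} (hh : Continuous h) (z : Z) : h z ≤ fiberSup π h (π z) :=
  le_csSup (((isClosed_singleton.preimage hπ).isCompact.image hh).bddAbove)
    (Set.mem_image_of_mem h rfl)

lemma exists_eq_fiberSup {π : Z → Y} (hπ : Continuous π) (hsurj : Function.Surjective π)
    {h : Z → ℝ} (hh : Continuous h) (y : Y) :
    ∃ z, π z = y ∧ h z = fiberSup π h y := by
  obtain ⟨z, hz, hz'⟩ := ((isClosed_singleton.preimage hπ).isCompact.image hh).sSup_mem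
    (Set.Nonempty.image h (hsurj y))
  exact ⟨z, hz, hz'⟩

lemma fiberSup_le {π : Z → Y} (hπ : Continuous π) (hsurj : Function.Surjective π)
    {h : Z → ℝ} (hh : Continuous h) {y : Y} {c : ℝ} (hc : ∀ z, π z = y → h z ≤ c) :
    fiberSup π h y ≤ c := by
  obtain ⟨z, hz, hz'⟩ := exists_eq_fiberSup hπ hsurj hh y
  exact hz' ▸ hc z hz

lemma abs_fiberSup_le {π : Z → Y} (hπ : Continuous π) (hsurj : Function.Surjective π)
    {h : Z → ℝ} (hh : Continuous h) {C : ℝ} (hC : ∀ z, |h z| ≤ C) (y : Y) :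
    |fiberSup π h y| ≤ C := by
  obtain ⟨z, -, hz'⟩ := exists_eq_fiberSup hπ hsurj hh y
  exact hz' ▸ hC z

lemma fiberSup_add_le {π : Z → Y} (hπ : Continuous π) (hsurj : Function.Surjective π)
    {g h : Z → ℝ} (hg : Continuous g) (hh : Continuous h) (y : Y) :
    fiberSup π (fun z ↦ g z + h z) y ≤ fiberSup π g y + fiberSup π h y :=
  fiberSup_le hπ hsurj (hg.add hh) fun z hz ↦
    hz ▸ add_le_add (le_fiberSup hπ hg z) (le_fiberSup hπ hh z)

lemma measurable_fiberSup {π : Z → Y} (hπ : Continuous π) (hsurj : Function.Surjective π)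
    [MeasurableSpace Y] [BorelSpace Y] {h : Z → ℝ} (hh : Continuous h) :
    Measurable (fiberSup π h) := by
  refine measurable_of_Ici fun a ↦ ?_
  have : fiberSup π h ⁻¹' Set.Ici a = π '' (h ⁻¹' Set.Ici a) := by
    ext y
    constructor
    · intro hy
      obtain ⟨z, hz, hz'⟩ := exists_eq_fiberSup hπ hsurj hh y
      exact ⟨z, by simpa [hz'] using hy, hz⟩
    · rintro ⟨z, hz, rfl⟩
      exact le_trans hz (le_fiberSup hπ hh z)
  rw [this]
  exact ((isClosed_Ici.preimage hh).isCompact.image hπ).isClosed.measurableSet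

end FiberSup

lemma abs_integral_le {X : Type*} [MeasurableSpace X] {μ : Measure X} [IsProbabilityMeasure μ]
    {g : X → ℝ} {C : ℝ} (hC : ∀ x, |g x| ≤ C) : |∫ x, g x ∂μ| ≤ C := by
  have := norm_integral_le_of_norm_le_const (f := g) (μ := μ) (C := C) (ae_of_all _ hC)
  simpa using this

lemma continuous_birk {Z : Type*} [TopologicalSpace Z] {U : Z → Z} (hU : Continuous U)
    {f : Z → ℝ} (hf : Continuous f) (k : ℕ) : Continuous (birk U f k) :=
  continuous_const.mul (continuous_finsetSum _ fun j _ ↦ hf.comp (hU.iterate j))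

lemma ContinuousMap.exists_abs_le {Z : Type*} [TopologicalSpace Z] [CompactSpace Z] (h : C(Z, ℝ)) :
    ∃ C, ∀ z, |h z| ≤ C :=
  ⟨‖h‖, fun z ↦ h.norm_coe_le_norm z⟩

/-- A bounded real sequence has a limit along any ultrafilter. -/
lemma exists_tendsto_ultrafilter (F : Ultrafilter ℕ) {u : ℕ → ℝ} {C : ℝ} (hu : ∀ k, |u k| ≤ C) :
    ∃ L, Tendsto u F (𝓝 L) := by
  obtain ⟨L, -, hL⟩ := (isCompact_Icc (a := -C) (b := C)).ultrafilter_le_nhds (F.map u)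
    (le_principal_iff.2 (mem_map.2 (univ_mem' fun k ↦ abs_le.1 (hu k))))
  exact ⟨L, hL⟩

lemma integral_birk {Y : Type*} [MeasurableSpace Y] {ν : Measure Y} [IsFiniteMeasure ν] {S : Y → Y}
    (hS : MeasurePreserving S ν ν) {g : Y → ℝ} (hg : Measurable g) {C : ℝ} (hC : ∀ y, |g y| ≤ C)
    {k : ℕ} (hk : k ≠ 0) : ∫ y, birk S g k y ∂ν = ∫ y, g y ∂ν := by
  have h1 : ∀ j, ∫ y, g (S^[j] y) ∂ν = ∫ y, g y ∂ν := fun j ↦ by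
    rw [← integral_map (hS.iterate j).measurable.aemeasurable hg.aestronglyMeasurable,
      (hS.iterate j).map_eq]
  simp only [birk]
  rw [integral_const_mul, integral_finsetSum _ fun j _ ↦
    show Integrable (fun y ↦ g (S^[j] y)) ν from
      (hS.iterate j).integrable_comp_of_integrable (integrable_of_abs_le hg hC)]
  simp [h1, hk]

lemma map_eq_of_forall_integral_comp_le {Z Y : Type*} [TopologicalSpace Z] [MeasurableSpace Z]
    [BorelSpace Z] [TopologicalSpace Y] [CompactSpace Y] [TopologicalSpace.MetrizableSpace Y]
    [MeasurableSpace Y] [BorelSpace Y] {μ : Measure Z} [IsFiniteMeasure μ] {ν : Measure Y}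
    [IsFiniteMeasure ν] {π : Z → Y} (hπ : Continuous π)
    (h : ∀ g : C(Y, ℝ), ∫ z, g (π z) ∂μ ≤ ∫ y, g y ∂ν) : μ.map π = ν := by
  refine ext_of_forall_integral_eq_of_IsFiniteMeasure fun g ↦ ?_
  rw [integral_map hπ.measurable.aemeasurable g.continuous.aestronglyMeasurable]
  refine le_antisymm (h g.toContinuousMap) ?_
  have := h (-g.toContinuousMap)
  simp only [ContinuousMap.neg_apply, integral_neg] at this
  exact neg_le_neg_iff.1 this

/-- Every invariant measure on the factor lifts to an invariant measure `λ` such that `∫ h₀ dλ` is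
a limit point of the integrals of the fibrewise suprema of the Birkhoff averages of `h₀`. -/
lemma exists_invariant_lift {Z Y : Type*}
    [TopologicalSpace Z] [CompactSpace Z] [TopologicalSpace.MetrizableSpace Z]
    [MeasurableSpace Z] [BorelSpace Z]
    [TopologicalSpace Y] [CompactSpace Y] [TopologicalSpace.MetrizableSpace Y]
    [MeasurableSpace Y] [BorelSpace Y]
    {U : Z → Z} (hU : Continuous U) {S : Y → Y} (hS : Continuous S) {π : Z → Y}
    (hπ : Continuous π) (hsurj : Function.Surjective π) (hfactor : S ∘ π = π ∘ U)
    {ν : ProbabilityMeasure Y} (hν : ν ∈ invMeas S) (h₀ : C(Z, ℝ)) :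
    ∃ lam ∈ invMeas U, lam.toMeasure.map π = ν.toMeasure ∧
      Tendsto (fun k ↦ ∫ y, fiberSup π (birk U h₀ k) y ∂ν.toMeasure) (hyperfilter ℕ)
        (𝓝 (∫ z, h₀ z ∂lam.toMeasure)) := by
  have hSν : MeasurePreserving S ν.toMeasure ν.toMeasure := ⟨hS.measurable, hν⟩
  have htop : (hyperfilter ℕ : Filter ℕ) ≤ atTop := Nat.hyperfilter_le_atTop
  have hc : ∀ (h : C(Z, ℝ)) k, Continuous (birk U h k) := fun h k ↦
    continuous_birk hU h.continuous k
  have hi : ∀ (h : C(Z, ℝ)) k, Integrable (fiberSup π (birk U h k)) ν.toMeasure := fun h k ↦ by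
    obtain ⟨C, hC⟩ := h.exists_abs_le
    exact integrable_of_abs_le (measurable_fiberSup hπ hsurj (hc h k))
      (abs_fiberSup_le hπ hsurj (hc h k) (abs_birk_le hC k))
  have hle : ∀ (h : C(Z, ℝ)) k (c : ℝ), (∀ z, birk U h k z ≤ c) →
      ∫ y, fiberSup π (birk U h k) y ∂ν.toMeasure ≤ c := fun h k c hhc ↦ by
    have := integral_mono (hi h k) (integrable_const c) fun y ↦
      fiberSup_le hπ hsurj (hc h k) fun z _ ↦ hhc z
    simpa using this
  have hex : ∀ h : C(Z, ℝ), ∃ L, Tendsto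
      (fun k ↦ ∫ y, fiberSup π (birk U h k) y ∂ν.toMeasure) (hyperfilter ℕ) (𝓝 L) := fun h ↦ by
    obtain ⟨C, hC⟩ := h.exists_abs_le
    refine exists_tendsto_ultrafilter _ (C := C) fun k ↦ ?_
    exact abs_integral_le (abs_fiberSup_le hπ hsurj (hc h k) (abs_birk_le hC k))
  choose N hN using hex
  obtain ⟨lam, hlam, hlam₀⟩ := exists_probabilityMeasure_le_sublinear N
    (fun c hc h ↦ by
      refine tendsto_nhds_unique (hN (c • h)) (((hN h).const_mul c).congr fun k ↦ ?_)
      rw [← integral_const_mul]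
      congr with y
      rw [← fiberSup_const_mul π _ hc.le]
      congr with z
      simp only [birk, ContinuousMap.coe_smul, Pi.smul_apply, smul_eq_mul, ← Finset.mul_sum]
      ring)
    (fun g h ↦ by
      refine le_of_tendsto_of_tendsto' (hN (g + h)) ((hN g).add (hN h)) fun k ↦ ?_
      rw [← integral_add (hi g k) (hi h k)]
      refine integral_mono (hi _ k) ((hi g k).add (hi h k)) fun y ↦ ?_
      have : birk U (g + h : C(Z, ℝ)) k = fun z ↦ birk U g k z + birk U h k z := by
        ext z
        simp [birk, Finset.sum_add_distrib, mul_add]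
      rw [this]
      exact fiberSup_add_le hπ hsurj (hc g k) (hc h k) y)
    (fun h c hhc ↦ by
      refine le_of_tendsto (hN h) (htop ?_)
      filter_upwards [eventually_gt_atTop 0] with k hk
      refine hle h k c fun z ↦ ?_
      rw [birk, inv_mul_le_iff₀ (by exact_mod_cast hk)]
      simpa using Finset.sum_le_card_nsmul (Finset.range k) _ _ fun j _ ↦ hhc (U^[j] z)) h₀
  refine ⟨lam, ?_, ?_, hlam₀ ▸ hN h₀⟩
  · refine map_eq_of_forall_integral_comp_le hU fun g ↦ ?_
    obtain ⟨C, hC⟩ := g.exists_abs_le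
    have h1 := hlam (g.comp ⟨U, hU⟩ - g)
    have hgi : Integrable g lam.toMeasure := integrable_of_abs_le g.continuous.measurable hC
    have hgUi : Integrable (fun z ↦ g (U z)) lam.toMeasure :=
      integrable_of_abs_le (g.continuous.comp hU).measurable fun z ↦ hC (U z)
    have h2 : N (g.comp ⟨U, hU⟩ - g) ≤ 0 := by
      have hlim : Tendsto (fun k : ℕ ↦ (2 * C) / (k : ℝ)) (hyperfilter ℕ) (𝓝 0) :=
        (tendsto_const_nhds.div_atTop tendsto_natCast_atTop_atTop).mono_left htop
      refine le_of_tendsto_of_tendsto' (hN _) hlim fun k ↦ hle _ k _ fun z ↦ ?_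
      have h3 : birk U (g.comp ⟨U, hU⟩ - g : C(Z, ℝ)) k z = (g (U^[k] z) - g z) / k := by
        rw [birk, inv_mul_eq_div]
        congr 1
        rw [← Function.iterate_zero_apply U z, ← Function.iterate_add_apply, add_zero,
          ← Finset.sum_range_sub fun j ↦ g (U^[j] z)]
        simp [Function.iterate_succ_apply']
      rw [h3]
      gcongr
      have h4 := (abs_le.1 (hC (U^[k] z))).2
      have h5 := (abs_le.1 (hC z)).1
      linarith
    simp only [ContinuousMap.sub_apply, ContinuousMap.comp_apply, ContinuousMap.coe_mk] at h1
    rw [integral_sub hgUi hgi] at h1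
    linarith
  · refine map_eq_of_forall_integral_comp_le hπ fun g ↦ ?_
    obtain ⟨C, hC⟩ := g.exists_abs_le
    refine (hlam (g.comp ⟨π, hπ⟩)).trans (le_of_tendsto (hN _) (htop ?_))
    filter_upwards [eventually_ne_atTop 0] with k hk
    rw [← integral_birk hSν g.continuous.measurable hC hk]
    refine integral_mono (hi _ k) (integrable_of_abs_le
      (measurable_birk hS.measurable g.continuous.measurable k) (abs_birk_le hC k)) fun y ↦ ?_
    refine fiberSup_le hπ hsurj (hc _ k) fun z hz ↦ ?_
    have hsemi : Function.Semiconj π U S := fun z ↦ (congrFun hfactor z).symm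
    simp only [birk, ContinuousMap.comp_apply, ContinuousMap.coe_mk, ← hz]
    simp only [fun j ↦ (hsemi.iterate_right j).eq z, le_refl]

lemma invMeas_nonempty {Y : Type*} [TopologicalSpace Y] [CompactSpace Y]
    [TopologicalSpace.MetrizableSpace Y] [MeasurableSpace Y] [BorelSpace Y] [Nonempty Y]
    {S : Y → Y} (hS : Continuous S) : (invMeas S).Nonempty := by
  obtain ⟨lam, hlam, -⟩ := exists_invariant_lift (Y := Unit) hS (S := id) continuous_id
    (π := fun _ ↦ ()) continuous_const (fun _ ↦ ⟨Classical.arbitrary Y, rfl⟩) rfl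
    (ν := ⟨Measure.dirac (), inferInstance⟩) Measure.map_id 0
  exact ⟨lam, hlam⟩

/-- for any factor map `π : (Z,U) → (Y,S)` and `f ∈ C(Z)`, `α(f) ≤ β(f)`. -/
theorem stmt4
    {Z Y : Type*}
    [TopologicalSpace Z] [CompactSpace Z] [TopologicalSpace.MetrizableSpace Z]
    [MeasurableSpace Z] [BorelSpace Z]
    [TopologicalSpace Y] [CompactSpace Y] [TopologicalSpace.MetrizableSpace Y]
    [MeasurableSpace Y] [BorelSpace Y]
    (U : Z ≃ₜ Z) (S : Y ≃ₜ Y) (π : Z → Y)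
    (hπcont : Continuous π) (hπsurj : Function.Surjective π)
    (hfactor : ⇑S ∘ π = π ∘ ⇑U)
    (f : Z → ℝ) (hf : Continuous f) :
    alphaF (⇑U) (⇑S) π f ≤ betaF (⇑U) π f := by
  obtain ⟨C, hC⟩ := ContinuousMap.exists_abs_le ⟨f, hf⟩
  change ∀ z, |f z| ≤ C at hC
  rcases isEmpty_or_nonempty Z with hZ | hZ
  · have hY : IsEmpty Y := ⟨fun y ↦ hZ.elim (hπsurj y).choose⟩
    have h1 : {r | ∃ ν ∈ invMeas S, r = psi U π f ν} = ∅ := by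
      ext r
      simp only [Set.mem_ofPred_eq, Set.mem_empty_iff_false, iff_false]
      rintro ⟨ν, -⟩
      exact hY.elim ν.nonempty.some
    have h2 : π '' regPts U f = ∅ := Set.eq_empty_of_isEmpty _
    simp [alphaF, betaF, h1, h2]
  have hY : Nonempty Y := hZ.map π
  have hlim : ∀ {z L}, Tendsto (fun k ↦ birk U f k z) atTop (𝓝 L) → |L| ≤ C := fun hL ↦
    le_of_tendsto' hL.abs fun k ↦ abs_birk_le hC k _
  have hbdd : BddAbove {r | ∃ y ∈ π '' regPts U f, r = sInf {L | ∃ z ∈ regPts U f, π z = y ∧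
      Tendsto (fun k : ℕ ↦ birk U f k z) atTop (𝓝 L)}} := by
    refine ⟨C, ?_⟩
    rintro r ⟨y, ⟨z, hz, rfl⟩, rfl⟩
    obtain ⟨L, hL⟩ := hz
    have hmem : L ∈ {L | ∃ z' ∈ regPts U f, π z' = π z ∧
        Tendsto (fun k : ℕ ↦ birk U f k z') atTop (𝓝 L)} := ⟨z, ⟨L, hL⟩, rfl, hL⟩
    refine (csInf_le ⟨-C, ?_⟩ hmem).trans (abs_le.1 (hlim hL)).2
    rintro L' ⟨z', -, -, hL'⟩
    exact (abs_le.1 (hlim hL')).1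
  obtain ⟨ν₀, hν₀⟩ := invMeas_nonempty S.continuous
  refine csSup_le ⟨_, ν₀, hν₀, rfl⟩ ?_
  rintro _ ⟨ν, hν, rfl⟩
  obtain ⟨lam, hlam, hlamν, hlamlim⟩ := exists_invariant_lift U.continuous S.continuous hπcont
    hπsurj hfactor hν (-⟨f, hf⟩)
  have hpsi : psi U π f ν ≤ ∫ z, f z ∂lam.toMeasure := by
    refine csInf_le ⟨-C, ?_⟩ ⟨lam, hlam, hlamν, rfl⟩
    rintro _ ⟨κ, -, -, rfl⟩
    exact (abs_le.1 (abs_integral_le hC)).1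
  refine hpsi.trans ?_
  set β := betaF U π f
  have hneg : ∀ k z, birk U (-⟨f, hf⟩ : C(Z, ℝ)) k z = -birk U f k z := fun k z ↦ by simp [birk]
  have hbc : ∀ k, Continuous (birk U (-⟨f, hf⟩ : C(Z, ℝ)) k) := fun k ↦
    continuous_birk U.continuous (ContinuousMap.continuous _) k
  set φ : ℕ → Y → ℝ := fun k ↦ fiberSup π (birk U (-⟨f, hf⟩ : C(Z, ℝ)) k)
  have hφm : ∀ k, Measurable (φ k) := fun k ↦ measurable_fiberSup hπcont hπsurj (hbc k)
  have hφC : ∀ k y, |φ k y| ≤ C := fun k ↦ abs_fiberSup_le hπcont hπsurj (hbc k) fun z ↦ by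
    rw [hneg, abs_neg]
    exact abs_birk_le hC k z
  have hev : ∀ z ∈ regPts U f, ∀ ε > 0, ∀ᶠ k in atTop, -β - ε < φ k (π z) := by
    intro z hz ε hε
    have hle : sInf {L | ∃ z' ∈ regPts U f, π z' = π z ∧
        Tendsto (fun k : ℕ ↦ birk U f k z') atTop (𝓝 L)} ≤ β :=
      le_csSup hbdd ⟨π z, ⟨z, hz, rfl⟩, rfl⟩
    have hne : {L | ∃ z' ∈ regPts U f, π z' = π z ∧
        Tendsto (fun k : ℕ ↦ birk U f k z') atTop (𝓝 L)}.Nonempty :=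
      ⟨hz.choose, z, hz, rfl, hz.choose_spec⟩
    obtain ⟨L, ⟨z', -, hz', hL⟩, hLβ⟩ := exists_lt_of_csInf_lt hne
      (hle.trans_lt (lt_add_of_pos_right β hε))
    filter_upwards [hL.eventually_lt_const hLβ] with k hk
    have := le_fiberSup hπcont (hbc k) z'
    rw [hneg, hz'] at this
    change _ ≤ φ k (π z) at this
    linarith
  have hψ : Tendsto (fun k ↦ ∫ z, max (-β - φ k (π z)) 0 ∂lam.toMeasure) atTop (𝓝 0) := by
    have hUlam : MeasurePreserving U lam.toMeasure lam.toMeasure :=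
      ⟨U.continuous.measurable, hlam⟩
    suffices h : Tendsto (fun k ↦ ∫ z, max (-β - φ k (π z)) 0 ∂lam.toMeasure) atTop
        (𝓝 (∫ _, (0 : ℝ) ∂lam.toMeasure)) by simpa using h
    refine tendsto_integral_of_dominated_convergence (fun _ ↦ |β| + C)
      (fun k ↦ ((measurable_const.sub ((hφm k).comp hπcont.measurable)).max
        measurable_const).aestronglyMeasurable) (integrable_const _)
      (fun k ↦ ae_of_all _ fun z ↦ ?_) ?_
    · rw [Real.norm_of_nonneg (le_max_right _ _)]
      have h1 := (abs_le.1 (hφC k (π z))).1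
      have h2 := neg_abs_le β
      exact max_le (by linarith) (by linarith [abs_nonneg (φ k (π z)), hφC k (π z), abs_nonneg β])
    · filter_upwards [ae_mem_regPts hUlam hf.measurable hC] with z hz
      refine tendsto_order.2 ⟨fun a ha ↦ Eventually.of_forall fun k ↦
        ha.trans_le (le_max_right _ _), fun a ha ↦ ?_⟩
      filter_upwards [hev z hz a ha] with k hk
      exact max_lt (by linarith) ha
  have hge : ∀ k, -β - ∫ z, max (-β - φ k (π z)) 0 ∂lam.toMeasure ≤ ∫ y, φ k y ∂ν.toMeasure := by
    intro k
    have hφi : Integrable (fun z ↦ φ k (π z)) lam.toMeasure :=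
      integrable_of_abs_le ((hφm k).comp hπcont.measurable) fun z ↦ hφC k (π z)
    have hmi : Integrable (fun z ↦ max (-β - φ k (π z)) 0) lam.toMeasure :=
      ((integrable_const (-β)).sub hφi).sup (integrable_const 0)
    rw [← hlamν, integral_map hπcont.measurable.aemeasurable (hφm k).aestronglyMeasurable,
      sub_le_iff_le_add, ← integral_add hφi hmi]
    have h1 : ∫ _, -β ∂lam.toMeasure = -β := by simp
    conv_lhs => rw [← h1]
    refine integral_mono (integrable_const _) (hφi.add hmi) fun z ↦ ?_
    have := le_max_left (-β - φ k (π z)) 0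
    change -β ≤ φ k (π z) + max (-β - φ k (π z)) 0
    linarith
  have hfinal := le_of_tendsto_of_tendsto'
    ((tendsto_const_nhds (x := -β)).sub (hψ.mono_left Nat.hyperfilter_le_atTop)) hlamlim hge
  simp only [ContinuousMap.neg_apply, ContinuousMap.coe_mk, integral_neg, sub_zero] at hfinal
  linarith
end
end

section
/- Let (X, T) and (Y, S) be topological dynamical systems such that (Y, S) has the periodic specification property, and let f ∈ C(X × Y). Then α(f) ≥ δ(f). -/
open MeasureTheory Filter Topology
open scoped ENNReal NNReal

noncomputable section

/-- Birkhoff average `A_k f(x, y) = (1/k) Σ_{j<k} f(T^j x, S^j y)`. -/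
def birk2 {X Y : Type*} (T : X → X) (S : Y → Y) (f : X × Y → ℝ) (k : ℕ) (x : X) (y : Y) : ℝ :=
  (k : ℝ)⁻¹ * ∑ j ∈ Finset.range k, f ((Prod.map T S)^[j] (x, y))

/-- `ψ_f(ν) = min { ∫ f dλ : λ ∈ M_{T×S}(X × Y), (π_Y)_* λ = ν }`. -/
def psi2 {X Y : Type*} [MeasurableSpace X] [MeasurableSpace Y]
    (T : X → X) (S : Y → Y) (f : X × Y → ℝ) (ν : ProbabilityMeasure Y) : ℝ :=
  sInf {r | ∃ lam ∈ invMeas (Prod.map T S), lam.toMeasure.map Prod.snd = ν.toMeasure ∧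
    r = ∫ p, f p ∂lam.toMeasure}

/-- `α(f) = sup_{ν ∈ M_S(Y)} ψ_f(ν)`. -/
def alpha2 {X Y : Type*} [MeasurableSpace X] [MeasurableSpace Y]
    (T : X → X) (S : Y → Y) (f : X × Y → ℝ) : ℝ :=
  sSup {r | ∃ ν ∈ invMeas S, r = psi2 T S f ν}

/-- `R_f`: points `(x, y)` whose Birkhoff averages converge. -/
def reg2 {X Y : Type*} (T : X → X) (S : Y → Y) (f : X × Y → ℝ) : Set (X × Y) :=
  {p | ∃ L : ℝ, Tendsto (fun k : ℕ => birk2 T S f k p.1 p.2) atTop (𝓝 L)}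

/-- `β(f) = sup_{y ∈ π_Y(R_f)} inf_{(x,y) ∈ R_f} lim_k A_k f(x, y)`. -/
def beta2 {X Y : Type*} (T : X → X) (S : Y → Y) (f : X × Y → ℝ) : ℝ :=
  sSup {r | ∃ y : Y, (∃ x : X, (x, y) ∈ reg2 T S f) ∧
    r = sInf {L | ∃ x : X, (x, y) ∈ reg2 T S f ∧
      Tendsto (fun k : ℕ => birk2 T S f k x y) atTop (𝓝 L)}}

/-- `γ(f) = sup_{y ∈ Y} inf_{x ∈ X} limsup_k A_k f(x, y)`. -/
def gamma2 {X Y : Type*} (T : X → X) (S : Y → Y) (f : X × Y → ℝ) : ℝ :=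
  ⨆ y : Y, ⨅ x : X, limsup (fun k : ℕ => birk2 T S f k x y) atTop

/-- `δ(f) = limsup_k max_{y ∈ Y} min_{x ∈ X} A_k f(x, y)`. -/
def delta2 {X Y : Type*} (T : X → X) (S : Y → Y) (f : X × Y → ℝ) : ℝ :=
  limsup (fun k : ℕ => ⨆ y : Y, ⨅ x : X, birk2 T S f k x y) atTop

/-- The invariant probability measures supported on a single closed (periodic) orbit. -/
def Mco {Z : Type*} [MeasurableSpace Z] (U : Z → Z) : Set (ProbabilityMeasure Z) :=
  {μ | ∃ (k : ℕ) (z : Z), 0 < k ∧ U^[k] z = z ∧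
    μ.toMeasure = (k : ℝ≥0∞)⁻¹ • ∑ j ∈ Finset.range k, Measure.dirac (U^[j] z)}

/-- `α_per(f)`: as `α(f)`, but with both measures ranging over closed-orbit measures. -/
def alphaPer2 {X Y : Type*} [MeasurableSpace X] [MeasurableSpace Y]
    (T : X → X) (S : Y → Y) (f : X × Y → ℝ) : ℝ :=
  sSup {r | ∃ ν ∈ Mco S,
    r = sInf {t | ∃ lam ∈ Mco (Prod.map T S), lam.toMeasure.map Prod.snd = ν.toMeasure ∧
      t = ∫ p, f p ∂lam.toMeasure}}

/-- The set of periodic points. -/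
def perPts {Z : Type*} (U : Z → Z) : Set Z :=
  {z | ∃ t : ℕ, 0 < t ∧ U^[t] z = z}

/-- `δ_per(f) = limsup_k sup_{y ∈ Per_S(Y)} inf_{x ∈ Per_T(X)} A_k f(x, y)`. -/
def deltaPer2 {X Y : Type*} (T : X → X) (S : Y → Y) (f : X × Y → ℝ) : ℝ :=
  limsup (fun k : ℕ => sSup {r | ∃ y ∈ perPts S,
    r = sInf {t | ∃ x ∈ perPts T, t = birk2 T S f k x y}}) atTop

/-- The `j`-th power (`j : ℤ`) of a homeomorphism, applied to a point. -/
def zit {X : Type*} [TopologicalSpace X] (T : X ≃ₜ X) (j : ℤ) (x : X) : X :=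
  (T.toEquiv ^ j) x

/-- The specification property for `(X, T)` (with respect to the metric of `X`):
for every `η > 0` there is `D = D(η)` such that every `D`-spaced specification
`ξ = (x_i, [a_i, b_i])_{i=1}^n` admits an `η`-tracing point. -/
def SpecProp {X : Type*} [MetricSpace X] (T : X ≃ₜ X) : Prop :=
  ∀ η : ℝ, 0 < η → ∃ D : ℕ, 0 < D ∧
    ∀ (n : ℕ) (x : Fin (n + 1) → X) (a b : Fin (n + 1) → ℤ),
      (∀ i, a i ≤ b i) →
      (∀ i : Fin n, (D : ℤ) ≤ a i.succ - b i.castSucc) →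
      ∃ x' : X, ∀ i : Fin (n + 1), ∀ j : ℤ, a i ≤ j → j ≤ b i →
        dist (zit T j x') (zit T j (x i)) < η

/-- The periodic specification property for `(X, T)`: as `SpecProp`, but the tracing
point can moreover be chosen of period `b_n - a_1 + D`. -/
def PerSpecProp {X : Type*} [MetricSpace X] (T : X ≃ₜ X) : Prop :=
  ∀ η : ℝ, 0 < η → ∃ D : ℕ, 0 < D ∧
    ∀ (n : ℕ) (x : Fin (n + 1) → X) (a b : Fin (n + 1) → ℤ),
      (∀ i, a i ≤ b i) →
      (∀ i : Fin n, (D : ℤ) ≤ a i.succ - b i.castSucc) →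
      ∃ x' : X, (∀ i : Fin (n + 1), ∀ j : ℤ, a i ≤ j → j ≤ b i →
          dist (zit T j x') (zit T j (x i)) < η) ∧
        zit T (b (Fin.last n) - a 0 + (D : ℤ)) x' = x'

/-- The average `(1/n) Σ_{j<n} (U^j)_* μ` of a measure along the iterates of a map. -/
def orbitAvg {Z : Type*} [MeasurableSpace Z] (U : Z → Z) (n : ℕ) (μ : Measure Z) : Measure Z :=
  (n : ℝ≥0∞)⁻¹ • ∑ j ∈ Finset.range n, μ.map U^[j]

lemma isProbabilityMeasure_orbitAvg {Z : Type*} [MeasurableSpace Z] {U : Z → Z}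
    (hU : Measurable U) {n : ℕ} (hn : 0 < n) (μ : Measure Z) [IsProbabilityMeasure μ] :
    IsProbabilityMeasure (orbitAvg U n μ) := by
  constructor
  have h : ∀ j ∈ Finset.range n, (μ.map U^[j]) Set.univ = 1 := fun j _ => by
    rw [Measure.map_apply (hU.iterate j) MeasurableSet.univ]
    simp
  rw [orbitAvg, Measure.smul_apply, Measure.finsetSum_apply, Finset.sum_congr rfl h]
  simp only [Finset.sum_const, Finset.card_range, nsmul_eq_mul, mul_one, smul_eq_mul]
  exact ENNReal.inv_mul_cancel (by exact_mod_cast hn.ne') (ENNReal.natCast_ne_top n)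

lemma map_orbitAvg {Z W : Type*} [MeasurableSpace Z] [MeasurableSpace W] {U : Z → Z} {V : W → W}
    {π : Z → W} (hU : Measurable U) (hV : Measurable V) (hπ : Measurable π)
    (h : Function.Semiconj π U V) (n : ℕ) (μ : Measure Z) :
    (orbitAvg U n μ).map π = orbitAvg V n (μ.map π) := by
  simp only [orbitAvg]
  rw [Measure.map_smul, ← Measure.mapₗ_apply_of_measurable hπ, map_sum]
  congr 1
  refine Finset.sum_congr rfl fun j _ => ?_
  rw [Measure.mapₗ_apply_of_measurable hπ, Measure.map_map hπ (hU.iterate j),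
    Measure.map_map (hV.iterate j) hπ, (h.iterate_right j).comp_eq]

lemma map_orbitAvg_self {Z : Type*} [MeasurableSpace Z] {U : Z → Z} (hU : Measurable U) {n : ℕ}
    {μ : Measure Z} (h : μ.map U^[n] = μ) : (orbitAvg U n μ).map U = orbitAvg U n μ := by
  simp only [orbitAvg]
  rw [Measure.map_smul, ← Measure.mapₗ_apply_of_measurable hU, map_sum]
  congr 1
  have hstep : ∀ j ∈ Finset.range n, Measure.mapₗ U (μ.map U^[j]) = μ.map U^[j + 1] :=
    fun j _ => by
      rw [Measure.mapₗ_apply_of_measurable hU, Measure.map_map hU (hU.iterate j),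
        Function.iterate_succ']
  rw [Finset.sum_congr rfl hstep]
  cases n with
  | zero => rfl
  | succ m =>
    rw [Finset.sum_range_succ, h, Finset.sum_range_succ']
    simp

lemma integral_orbitAvg {Z : Type*} [TopologicalSpace Z] [CompactSpace Z] [MeasurableSpace Z]
    [BorelSpace Z] {U : Z → Z} (hU : Continuous U) (n : ℕ) (z : Z)
    {g : Z → ℝ} (hg : Continuous g) :
    ∫ w, g w ∂(orbitAvg U n (Measure.dirac z)) =
      (n : ℝ)⁻¹ * ∑ j ∈ Finset.range n, g (U^[j] z) := by
  rw [orbitAvg, integral_smul_measure, integral_finsetSum_measure]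
  · simp only [Measure.map_dirac' (hU.measurable.iterate _)]
    rw [Finset.sum_congr rfl fun j _ => integral_dirac' g _ hg.stronglyMeasurable]
    simp
  · intro j _
    rw [Measure.map_dirac' (hU.measurable.iterate _)]
    exact hg.integrable_of_hasCompactSupport (HasCompactSupport.of_compactSpace g)

/-- **Krylov–Bogolyubov theorem**. -/
theorem exists_invariant_measure {Z : Type*} [MetricSpace Z] [CompactSpace Z] [Nonempty Z]
    [MeasurableSpace Z] [BorelSpace Z] {U : Z → Z} (hU : Continuous U) :
    ∃ μ : ProbabilityMeasure Z, μ.toMeasure.map U = μ.toMeasure := by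
  obtain ⟨z⟩ := ‹Nonempty Z›
  let m : ℕ → ProbabilityMeasure Z := fun n =>
    ⟨orbitAvg U (n + 1) (Measure.dirac z),
      isProbabilityMeasure_orbitAvg hU.measurable n.succ_pos _⟩
  obtain ⟨μ, -, hμ⟩ := (isCompact_univ (X := ProbabilityMeasure Z)).ultrafilter_le_nhds
    ((hyperfilter ℕ).map m) (by simp)
  have hlim : Tendsto m (hyperfilter ℕ) (𝓝 μ) := hμ
  refine ⟨μ, ?_⟩
  have := Measure.isProbabilityMeasure_map (μ := μ.toMeasure) hU.measurable.aemeasurable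
  refine ext_of_forall_integral_eq_of_IsFiniteMeasure fun g => ?_
  rw [integral_map hU.measurable.aemeasurable g.continuous.aestronglyMeasurable]
  have h1 := ProbabilityMeasure.tendsto_iff_forall_integral_tendsto.1 hlim g
  have h2 := ProbabilityMeasure.tendsto_iff_forall_integral_tendsto.1 hlim
    (g.compContinuous ⟨U, hU⟩)
  have h3 : Tendsto (fun n => ∫ w, g (U w) ∂(m n).toMeasure - ∫ w, g w ∂(m n).toMeasure)
      atTop (𝓝 0) := by
    have hb : Tendsto (fun n : ℕ => (2 * ‖g‖) * (1 / ((n : ℝ) + 1))) atTop (𝓝 0) := by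
      simpa using tendsto_one_div_add_atTop_nhds_zero_nat.const_mul (2 * ‖g‖)
    refine squeeze_zero_norm (fun n => ?_) hb
    have e1 := integral_orbitAvg hU (n + 1) z (g.continuous.comp hU)
    have e2 := integral_orbitAvg hU (n + 1) z g.continuous
    simp only [Function.comp_apply, ← Function.iterate_succ_apply'] at e1
    change ‖∫ w, g (U w) ∂(orbitAvg U (n + 1) (Measure.dirac z)) -
      ∫ w, g w ∂(orbitAvg U (n + 1) (Measure.dirac z))‖ ≤ _
    rw [e1, e2, ← mul_sub, ← Finset.sum_sub_distrib,
      Finset.sum_range_sub (fun j => g (U^[j] z)), norm_mul, mul_comm]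
    have hn : ‖((n + 1 : ℕ) : ℝ)⁻¹‖ = 1 / ((n : ℝ) + 1) := by
      rw [Real.norm_of_nonneg (by positivity)]
      push_cast
      rw [one_div]
    rw [hn]
    gcongr
    refine (norm_sub_le _ _).trans ?_
    linarith [g.norm_coe_le_norm (U^[n + 1] z), g.norm_coe_le_norm (U^[0] z)]
  have h4 := (h2.sub h1)
  have h5 := tendsto_nhds_unique h4 (h3.mono_left (Nat.hyperfilter_le_atTop))
  simpa [sub_eq_zero] using h5

/-- The measure equidistributed on a periodic orbit of `S` lifts to an invariant measure of
`T × S`. -/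
lemma exists_lift_orbitAvg {X Y : Type*}
    [MetricSpace X] [CompactSpace X] [Nonempty X] [MeasurableSpace X] [BorelSpace X]
    [MeasurableSpace Y] {T : X → X} {S : Y → Y} (hT : Continuous T) (hS : Measurable S)
    {p : ℕ} (hp : 0 < p) {y : Y} (hy : S^[p] y = y) :
    ∃ lam ∈ invMeas (Prod.map T S),
      lam.toMeasure.map Prod.snd = orbitAvg S p (Measure.dirac y) := by
  obtain ⟨μ, hμ⟩ := exists_invariant_measure (hT.iterate p)
  have hU : Measurable (Prod.map T S) := hT.measurable.prodMap hS
  refine ⟨⟨orbitAvg (Prod.map T S) p (μ.toMeasure.prod (Measure.dirac y)),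
    isProbabilityMeasure_orbitAvg hU hp _⟩, ?_, ?_⟩
  · refine map_orbitAvg_self hU ?_
    rw [Prod.map_iterate, ← Measure.map_prod_map _ _ (hT.measurable.iterate p) (hS.iterate p),
      hμ, Measure.map_dirac' (hS.iterate p), hy]
  · change (orbitAvg (Prod.map T S) p (μ.toMeasure.prod (Measure.dirac y))).map Prod.snd = _
    rw [map_orbitAvg hU hS measurable_snd (fun _ => rfl), Measure.map_snd_prod]
    simp

/-- An invariant measure of `T × S` over a periodic orbit integrates `f` to at least the infimum
of the averages of `f` over that period, started above a fixed point of the orbit. -/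
lemma le_integral_of_map_snd_eq_orbitAvg {X Y : Type*}
    [MetricSpace X] [CompactSpace X] [MeasurableSpace X] [BorelSpace X]
    [MetricSpace Y] [CompactSpace Y] [MeasurableSpace Y] [BorelSpace Y]
    (T : X ≃ₜ X) (S : Y ≃ₜ Y) {f : X × Y → ℝ} (hf : Continuous f)
    {p : ℕ} (hp : 0 < p) {y : Y} (hy : S^[p] y = y) {L : ℝ}
    (hL : ∀ x, L ≤ birk2 T S f p x y) {lam : Measure (X × Y)} [IsProbabilityMeasure lam]
    (hlam : lam.map (Prod.map T S) = lam)
    (hsnd : lam.map Prod.snd = orbitAvg S p (Measure.dirac y)) :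
    L ≤ ∫ z, f z ∂lam := by
  set U : X × Y → X × Y := Prod.map T S with hUdef
  set ν := orbitAvg S p (Measure.dirac y) with hν
  have hSm : Measurable S := S.continuous.measurable
  have : IsProbabilityMeasure ν := isProbabilityMeasure_orbitAvg hSm hp _
  have hUc : Continuous U := T.continuous.prodMap S.continuous
  have hUp : MeasurePreserving U lam lam := ⟨hUc.measurable, hlam⟩
  have hUi : Function.Injective U := T.injective.prodMap S.injective
  have hint : ∀ g : X × Y → ℝ, Continuous g → Integrable g lam := fun g hg =>
    hg.integrable_of_hasCompactSupport (HasCompactSupport.of_compactSpace g)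
  have hνinv : ν.map S = ν := map_orbitAvg_self hSm (by
    rw [Measure.map_dirac' (hSm.iterate p), hy])
  have hSp : MeasurePreserving S ν ν := ⟨hSm, hνinv⟩
  have hpR : (0 : ℝ) < p := by exact_mod_cast hp
  classical
  have happ : ∀ A : Set Y, MeasurableSet A →
      (p : ℝ) * ν.real A = ∑ j ∈ Finset.range p, A.indicator 1 (S^[j] y) := by
    intro A hA
    have h : ν.real A = (p : ℝ)⁻¹ * ∑ j ∈ Finset.range p, A.indicator 1 (S^[j] y) := by
      rw [hν, orbitAvg, measureReal_def, Measure.smul_apply, Measure.finsetSum_apply]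
      simp only [Measure.map_dirac' (hSm.iterate _), Measure.dirac_apply' _ hA, smul_eq_mul,
        ENNReal.toReal_mul, ENNReal.toReal_inv, ENNReal.toReal_natCast]
      rw [ENNReal.toReal_sum]
      · congr 1
        refine Finset.sum_congr rfl fun j _ => ?_
        by_cases hj : S^[j] y ∈ A <;> simp [hj]
      · intro j _
        by_cases hj : S^[j] y ∈ A <;> simp [hj]
    rw [h, mul_inv_cancel_left₀ hpR.ne']
  set c := ν.real {y} with hc
  have hc0 : 0 < c := by
    have h := happ {y} (measurableSet_singleton y)
    have h1 : (1 : ℝ) ≤ ∑ j ∈ Finset.range p, ({y} : Set Y).indicator 1 (S^[j] y) := by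
      refine le_trans ?_ (Finset.single_le_sum (f := fun j => ({y} : Set Y).indicator 1 (S^[j] y))
        (fun j _ => Set.indicator_nonneg (by simp) _) (Finset.mem_range.2 hp))
      simp
    by_contra hneg
    nlinarith
  have hcj : ∀ j, ν.real {S^[j] y} = c := by
    intro j
    have h := (hSp.iterate j).measureReal_preimage
      (measurableSet_singleton (S^[j] y)).nullMeasurableSet
    rw [← h, hc]
    congr 1
    ext w
    simp [(S.injective.iterate j).eq_iff]
  let B : ℕ → Set (X × Y) := fun j => Prod.snd ⁻¹' {S^[j] y}
  have hBm : ∀ j, MeasurableSet (B j) := fun j =>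
    measurable_snd (measurableSet_singleton _)
  have hB0 : lam.real (B 0) = c := by
    rw [hc, ← hsnd, map_measureReal_apply measurable_snd (measurableSet_singleton _)]
    rfl
  have hae : ∀ᵐ w ∂ν, w ∈ {w | ∃ j, S^[j] y = w} := by
    have hO : MeasurableSet {w | ∃ j, S^[j] y = w} := (Set.countable_range _).measurableSet
    change ν {w | ∃ j, S^[j] y = w}ᶜ = 0
    have h := happ _ hO.compl
    rw [Finset.sum_eq_zero fun j _ => by simp] at h
    exact (measureReal_eq_zero_iff).1 ((mul_eq_zero.1 h).resolve_left hpR.ne')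
  have hsum : (fun z => ∑ j ∈ Finset.range p, (B j).indicator f z) =ᵐ[lam]
      fun z => ((p : ℝ) * c) * f z := by
    have hae' : ∀ᵐ z ∂lam, ∃ j, S^[j] y = z.2 := by
      rw [← hsnd] at hae
      exact ae_of_ae_map measurable_snd.aemeasurable hae
    filter_upwards [hae'] with z hz
    obtain ⟨i, hi⟩ := hz
    rw [← hcj i, happ _ (measurableSet_singleton _), Finset.sum_mul]
    refine Finset.sum_congr rfl fun j _ => ?_
    by_cases hj : S^[j] y = z.2
    · simp [B, hi, hj]
    · simp [B, hi, hj, Ne.symm hj]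
  have hI : ∀ j, ∫ z in B j, f z ∂lam = ∫ z in B 0, f (U^[j] z) ∂lam := by
    intro j
    have hemb : MeasurableEmbedding U^[j] :=
      (hUc.iterate j).isClosedEmbedding (hUi.iterate j) |>.measurableEmbedding
    rw [← (hUp.iterate j).setIntegral_preimage_emb hemb]
    congr 2
    ext ⟨a, w⟩
    simp [B, hUdef, Prod.map_iterate, (S.injective.iterate j).eq_iff]
  have key : ((p : ℝ) * c) * ∫ z, f z ∂lam
      = ∫ z in B 0, (∑ j ∈ Finset.range p, f (U^[j] z)) ∂lam := by
    rw [← integral_const_mul, ← integral_congr_ae hsum, integral_finsetSum, integral_finsetSum]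
    · refine Finset.sum_congr rfl fun j _ => ?_
      rw [integral_indicator (hBm j), hI]
    · exact fun j _ => (hint _ (hf.comp (hUc.iterate j))).integrableOn
    · exact fun j _ => (hint _ hf).indicator (hBm j)
  have hge : c * (p * L) ≤ ∫ z in B 0, (∑ j ∈ Finset.range p, f (U^[j] z)) ∂lam := by
    rw [← hB0, ← smul_eq_mul, ← setIntegral_const]
    refine setIntegral_mono_on (integrable_const _).integrableOn
      (integrable_finsetSum _ fun j _ => (hint _ (hf.comp (hUc.iterate j)))).integrableOn
      (hBm 0) ?_
    rintro ⟨x, w⟩ hw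
    obtain rfl : w = y := hw
    have := hL x
    rw [birk2, ← div_eq_inv_mul, le_div_iff₀ hpR] at this
    linarith
  rw [← key] at hge
  have hpc : 0 < (p : ℝ) * c := by positivity
  refine le_of_mul_le_mul_left ?_ hpc
  linarith

lemma zit_natCast {X : Type*} [TopologicalSpace X] (T : X ≃ₜ X) (j : ℕ) (x : X) :
    zit T (j : ℤ) x = T^[j] x := by
  rw [zit, zpow_natCast, ← Equiv.Perm.iterate_eq_pow]
  rfl

lemma abs_birk2_le {X Y : Type*} {T : X → X} {S : Y → Y} {f : X × Y → ℝ} {M : ℝ} (hM0 : 0 ≤ M)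
    (hM : ∀ z, |f z| ≤ M) (k : ℕ) (x : X) (y : Y) : |birk2 T S f k x y| ≤ M := by
  rw [birk2, abs_mul, abs_of_nonneg (by positivity : (0 : ℝ) ≤ (k : ℝ)⁻¹)]
  rcases k.eq_zero_or_pos with rfl | hk
  · simpa using hM0
  · have hk' : (0 : ℝ) < k := by exact_mod_cast hk
    rw [inv_mul_le_iff₀ hk']
    refine (Finset.abs_sum_le_sum_abs _ _).trans ?_
    refine (Finset.sum_le_sum fun j _ => hM _).trans ?_
    simp

lemma abs_integral_le_of_abs_le {Z : Type*} [MeasurableSpace Z] {μ : Measure Z}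
    [IsProbabilityMeasure μ] {f : Z → ℝ} {M : ℝ} (hM : ∀ z, |f z| ≤ M) : |∫ z, f z ∂μ| ≤ M := by
  simpa using norm_integral_le_of_norm_le_const (μ := μ) (f := f) (ae_of_all _ hM)

lemma psi2_le_of_abs_le {X Y : Type*} [MeasurableSpace X] [MeasurableSpace Y]
    {T : X → X} {S : Y → Y} {f : X × Y → ℝ} {M : ℝ} (hM0 : 0 ≤ M) (hM : ∀ z, |f z| ≤ M)
    (ν : ProbabilityMeasure Y) : psi2 T S f ν ≤ M := by
  rw [psi2]
  rcases Set.eq_empty_or_nonempty {r | ∃ lam ∈ invMeas (Prod.map T S),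
    lam.toMeasure.map Prod.snd = ν.toMeasure ∧ r = ∫ p, f p ∂lam.toMeasure} with h | ⟨r, hr⟩
  · simpa [h] using hM0
  · refine (csInf_le ⟨-M, ?_⟩ hr).trans ?_
    · rintro _ ⟨lam, -, -, rfl⟩
      exact (abs_le.1 (abs_integral_le_of_abs_le hM)).1
    · obtain ⟨lam, -, -, rfl⟩ := hr
      exact (abs_le.1 (abs_integral_le_of_abs_le hM)).2

/-- A lower bound for the averages of `f` over a period of a periodic point of `S` is a lower
bound for `α(f)`. -/
lemma le_alpha2_of_periodic {X Y : Type*}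
    [MetricSpace X] [CompactSpace X] [Nonempty X] [MeasurableSpace X] [BorelSpace X]
    [MetricSpace Y] [CompactSpace Y] [MeasurableSpace Y] [BorelSpace Y]
    (T : X ≃ₜ X) (S : Y ≃ₜ Y) {f : X × Y → ℝ} (hf : Continuous f)
    {M : ℝ} (hM0 : 0 ≤ M) (hM : ∀ z, |f z| ≤ M)
    {p : ℕ} (hp : 0 < p) {y : Y} (hy : S^[p] y = y) {L : ℝ}
    (hL : ∀ x, L ≤ birk2 T S f p x y) : L ≤ alpha2 T S f := by
  have hSm : Measurable S := S.continuous.measurable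
  let ν : ProbabilityMeasure Y :=
    ⟨orbitAvg S p (Measure.dirac y), isProbabilityMeasure_orbitAvg hSm hp _⟩
  have hν : ν ∈ invMeas S := map_orbitAvg_self hSm (by
    rw [Measure.map_dirac' (hSm.iterate p), hy])
  have hle : L ≤ psi2 T S f ν := by
    obtain ⟨lam, h1, h2⟩ := exists_lift_orbitAvg T.continuous hSm hp hy
    refine le_csInf ⟨_, lam, h1, h2, rfl⟩ ?_
    rintro _ ⟨κ, h3, h4, rfl⟩
    exact le_integral_of_map_snd_eq_orbitAvg T S hf hp hy hL h3 h4
  refine hle.trans (le_csSup ⟨M, ?_⟩ ⟨ν, hν, rfl⟩)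
  rintro _ ⟨κ, -, rfl⟩
  exact psi2_le_of_abs_le hM0 hM κ

/-- Shadowing an orbit segment of length `k` by an orbit of length `p ≥ k` lowers the minimal
average by a controlled amount. -/
lemma sub_le_birk2_of_shadow {X Y : Type*} {T : X → X} {S : Y → Y} {f : X × Y → ℝ} {M ε I : ℝ}
    (hM : ∀ z, |f z| ≤ M) (hI : |I| ≤ M) (hε : 0 ≤ ε) {k p : ℕ} (hk : 0 < k) (hkp : k ≤ p)
    {x : X} {y w : Y} (hIx : I ≤ birk2 T S f k x y)
    (hclose : ∀ j < k, ∀ a, f (a, S^[j] y) - ε ≤ f (a, S^[j] w))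
    (hsmall : 2 * M * (p - k) ≤ ε * p) :
    I - 2 * ε ≤ birk2 T S f p x w := by
  have hk' : (0 : ℝ) < k := by exact_mod_cast hk
  have hkp' : (k : ℝ) ≤ p := by exact_mod_cast hkp
  have hp' : (0 : ℝ) < p := hk'.trans_le hkp'
  rw [birk2, ← div_eq_inv_mul, le_div_iff₀ hk'] at hIx
  rw [birk2, ← div_eq_inv_mul, le_div_iff₀ hp', ← Finset.sum_range_add_sum_Ico _ hkp]
  have h1 : ∑ j ∈ Finset.range k, f ((Prod.map T S)^[j] (x, y)) - k * ε ≤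
      ∑ j ∈ Finset.range k, f ((Prod.map T S)^[j] (x, w)) := by
    have : (k : ℝ) * ε = ∑ j ∈ Finset.range k, ε := by simp
    rw [this, ← Finset.sum_sub_distrib]
    refine Finset.sum_le_sum fun j hj => ?_
    simpa [Prod.map_iterate] using hclose j (Finset.mem_range.1 hj) (T^[j] x)
  have h2 : -((p - k) * M) ≤ ∑ j ∈ Finset.Ico k p, f ((Prod.map T S)^[j] (x, w)) := by
    have : -((p - k) * M) = ∑ j ∈ Finset.Ico k p, -M := by
      simp [Nat.cast_sub hkp]
    rw [this]
    exact Finset.sum_le_sum fun j _ => (abs_le.1 (hM _)).1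
  have h3 := abs_le.1 hI
  nlinarith [mul_nonneg (sub_nonneg.2 hkp') (sub_nonneg.2 h3.2),
    mul_nonneg (sub_nonneg.2 hkp') hε]

/-- if `(Y, S)` has the periodic specification property, then
`α(f) ≥ δ(f)`. -/
theorem stmt13
    {X Y : Type*}
    [MetricSpace X] [CompactSpace X] [Nonempty X] [MeasurableSpace X] [BorelSpace X]
    [MetricSpace Y] [CompactSpace Y] [Nonempty Y] [MeasurableSpace Y] [BorelSpace Y]
    (T : X ≃ₜ X) (S : Y ≃ₜ Y) (f : X × Y → ℝ) (hf : Continuous f)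
    (hspecY : PerSpecProp S) :
    delta2 (⇑T) (⇑S) f ≤ alpha2 (⇑T) (⇑S) f := by
  obtain ⟨M, hM⟩ : ∃ M, ∀ z, |f z| ≤ M := by
    obtain ⟨M, hM⟩ := isCompact_univ.exists_bound_of_continuousOn hf.continuousOn
    exact ⟨M, fun z => hM z trivial⟩
  have hM0 : 0 ≤ M := (abs_nonneg _).trans (hM (Classical.arbitrary _))
  have hlow : ∀ k x y, -M ≤ birk2 T S f k x y := fun k x y =>
    (abs_le.1 (abs_birk2_le hM0 hM k x y)).1
  have hup : ∀ k x y, birk2 T S f k x y ≤ M := fun k x y =>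
    (abs_le.1 (abs_birk2_le hM0 hM k x y)).2
  have hbdd : ∀ k y, BddBelow (Set.range fun x => birk2 T S f k x y) := fun k y =>
    ⟨-M, by rintro _ ⟨x, rfl⟩; exact hlow k x y⟩
  have hIlow : ∀ k y, -M ≤ ⨅ x, birk2 T S f k x y := fun k y => le_ciInf fun x => hlow k x y
  have hIup : ∀ k y, ⨅ x, birk2 T S f k x y ≤ M := fun k y =>
    (ciInf_le (hbdd k y) (Classical.arbitrary X)).trans (hup k _ y)
  refine le_of_forall_pos_le_add fun ε' hε' => ?_
  obtain ⟨ε, hε, rfl⟩ : ∃ ε > 0, ε' = 2 * ε := ⟨ε' / 2, by positivity, by ring⟩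
  obtain ⟨η, hη, hunif⟩ := Metric.uniformContinuous_iff.1
    (CompactSpace.uniformContinuous_of_continuous hf) ε hε
  obtain ⟨D, hD, hspec⟩ := hspecY η hη
  obtain ⟨K, hK⟩ := exists_nat_ge (2 * M * D / ε)
  refine limsup_le_of_le ⟨-M, fun a ha => ?_⟩ ?_
  · obtain ⟨k, hk⟩ := (eventually_map.1 ha).exists
    refine le_trans ?_ hk
    exact (hIlow k (Classical.arbitrary Y)).trans
      (le_ciSup (f := fun y => ⨅ x, birk2 T S f k x y)
        ⟨M, by rintro _ ⟨y, rfl⟩; exact hIup k y⟩ _)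
  filter_upwards [eventually_ge_atTop (K + 1)] with k hk
  refine ciSup_le fun y => ?_
  have hk0 : 0 < k := by omega
  obtain ⟨w, hw, hper⟩ := hspec 0 (fun _ => y) (fun _ => 0) (fun _ => ((k - 1 : ℕ) : ℤ))
    (fun _ => by positivity) (fun i => i.elim0)
  rw [sub_zero, ← Nat.cast_add, zit_natCast] at hper
  have hpk : ((k - 1 + D : ℕ) : ℝ) - k ≤ D := by
    have : ((k - 1 + D : ℕ) : ℝ) ≤ ((k + D : ℕ) : ℝ) := by exact_mod_cast (by omega)
    push_cast at this ⊢
    linarith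
  have hKp : (K : ℝ) ≤ ((k - 1 + D : ℕ) : ℝ) := by exact_mod_cast (by omega)
  rw [← sub_le_iff_le_add]
  refine le_alpha2_of_periodic T S hf hM0 hM (by omega) hper fun x => ?_
  refine sub_le_birk2_of_shadow hM (abs_le.2 ⟨hIlow k y, hIup k y⟩) hε.le hk0 (by omega)
    (ciInf_le (hbdd k y) x) ?_ ?_
  · intro j hj a
    have h := hw 0 j (by positivity) (by exact_mod_cast (by omega))
    rw [zit_natCast, zit_natCast] at h
    have h' : dist ((a, S^[j] w) : X × Y) (a, S^[j] y) < η := by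
      simpa [Prod.dist_eq, hη] using h
    have := abs_lt.1 (hunif h')
    linarith [this.1]
  · rw [div_le_iff₀ hε] at hK
    nlinarith [mul_le_mul_of_nonneg_left hpk hM0, mul_le_mul_of_nonneg_right hKp hε.le]
end
end
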